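/- arXiv:1905.02387 — 7 statements merged into one kernel-verified Lean document; each statement's English description precedes it below -/
import Mathlib

section
/- For every king permutation π of length n ≥ 4, either [2413] ⪯ π or [3142] ⪯ π. -/
open Equiv

/-- The Manhattan distance between two elements of `Fin n`. -/
def fdist {n : ℕ} (a b : Fin n) : ℕ := ((a : ℤ) - (b : ℤ)).natAbs

/-- A king permutation: no two adjacent positions carry adjacent values. -/
def IsKing {n : ℕ} (σ : Equiv.Perm (Fin n)) : Prop :=
  ∀ i j : Fin n, (j : ℕ) = (i : ℕ) + 1 → fdist (σ i) (σ j) ≠ 1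

/-- Pattern containment `π ⪯ σ`. -/
def Contains {m n : ℕ} (π : Equiv.Perm (Fin m)) (σ : Equiv.Perm (Fin n)) : Prop :=
  ∃ f : Fin m ↪o Fin n, ∀ a b : Fin m, π a < π b ↔ σ (f a) < σ (f b)

/-- Strict pattern containment `π ≺ σ`. -/
def StrictContains {m n : ℕ} (π : Equiv.Perm (Fin m)) (σ : Equiv.Perm (Fin n)) : Prop :=
  Contains π σ ∧ m < n

/-- `nabla σ i` deletes the `i`-th entry of `σ` and standardizes. -/
def nabla {n : ℕ} (σ : Equiv.Perm (Fin (n + 1))) (i : Fin (n + 1)) : Equiv.Perm (Fin n) :=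
  Equiv.removeNone ((finSuccEquiv' i).symm.trans (σ.trans (finSuccEquiv' (σ i))))

/-- `nablaStar σ a` deletes the value `a` from `σ` and standardizes. -/
def nablaStar {n : ℕ} (σ : Equiv.Perm (Fin (n + 1))) (a : Fin (n + 1)) : Equiv.Perm (Fin n) :=
  nabla σ (σ⁻¹ a)

/-- The permutation [2413] (0-based one-line notation [1,3,0,2]). -/
def p2413 : Equiv.Perm (Fin 4) :=
  ⟨![1, 3, 0, 2], ![2, 0, 3, 1], by intro x; fin_cases x <;> rfl, by intro x; fin_cases x <;> rfl⟩

/-- The permutation [3142] (0-based one-line notation [2,0,3,1]). -/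
def p3142 : Equiv.Perm (Fin 4) :=
  ⟨![2, 0, 3, 1], ![1, 3, 0, 2], by intro x; fin_cases x <;> rfl, by intro x; fin_cases x <;> rfl⟩

/-- `σ i` vertically separates `σ j` from `σ k`. -/
def VSep {n : ℕ} (σ : Equiv.Perm (Fin n)) (i j k : Fin n) : Prop :=
  i ≠ j ∧ i ≠ k ∧ j ≠ k ∧ fdist i j = 1 ∧ fdist i k = 1 ∧ fdist (σ j) (σ k) = 1

/-- `σ i` horizontally separates `σ j` from `σ k`. -/
def HSep {n : ℕ} (σ : Equiv.Perm (Fin n)) (i j k : Fin n) : Prop :=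
  i ≠ j ∧ i ≠ k ∧ j ≠ k ∧ fdist (σ i) (σ j) = 1 ∧ fdist (σ i) (σ k) = 1 ∧ fdist j k = 1

/-- `σ i` separates `σ j` from `σ k`. -/
def Separates {n : ℕ} (σ : Equiv.Perm (Fin n)) (i j k : Fin n) : Prop :=
  VSep σ i j k ∨ HSep σ i j k

/-- `π` has a 2-block at positions `j`, `j+1` (0-based). -/
def HasTwoBlockAt {n : ℕ} (π : Equiv.Perm (Fin n)) (j : ℕ) : Prop :=
  ∃ hj : j + 1 < n, fdist (π ⟨j, by omega⟩) (π ⟨j + 1, hj⟩) = 1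

/-- `π` has a 3-block at positions `p`, `p+1`, `p+2` (0-based). -/
def HasThreeBlockAt {n : ℕ} (π : Equiv.Perm (Fin n)) (p : ℕ) : Prop :=
  ∃ hp : p + 2 < n, ∃ m : ℕ,
    ({(π ⟨p, by omega⟩ : ℕ), (π ⟨p + 1, by omega⟩ : ℕ), (π ⟨p + 2, by omega⟩ : ℕ)} : Finset ℕ)
      = {m, m + 1, m + 2}

def KUp (f : ℕ → ℤ) (s : Finset ℕ) (t : ℕ) : Prop :=
  (∃ i ∈ s, i < t) ∧ (∃ i ∈ s, t ≤ i) ∧ ∀ i ∈ s, ∀ j ∈ s, i < t → t ≤ j → f i < f j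

def KAv (f : ℕ → ℤ) (s : Finset ℕ) : Prop :=
  ∀ a ∈ s, ∀ b ∈ s, ∀ c ∈ s, ∀ d ∈ s, a < b → b < c → c < d →
    ¬ (f c < f a ∧ f a < f d ∧ f d < f b) ∧ ¬ (f b < f d ∧ f d < f a ∧ f a < f c)

def KInj (f : ℕ → ℤ) (s : Finset ℕ) : Prop := ∀ a ∈ s, ∀ b ∈ s, f a = f b → a = b

def KSplit (f : ℕ → ℤ) (s : Finset ℕ) : Prop :=
  ∃ t, KUp f s t ∨ KUp (fun i => - f i) s t

lemma KAv.mono {f : ℕ → ℤ} {s t : Finset ℕ} (h : KAv f s) (hst : t ⊆ s) : KAv f t :=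
  fun a ha b hb c hc d hd => h a (hst ha) b (hst hb) c (hst hc) d (hst hd)

lemma KInj.mono {f : ℕ → ℤ} {s t : Finset ℕ} (h : KInj f s) (hst : t ⊆ s) : KInj f t :=
  fun a ha b hb => h a (hst ha) b (hst hb)

lemma KAv.neg {f : ℕ → ℤ} {s : Finset ℕ} (h : KAv f s) : KAv (fun i => - f i) s := by
  intro a ha b hb c hc d hd h1 h2 h3
  have := h a ha b hb c hc d hd h1 h2 h3
  simp only [neg_lt_neg_iff]
  constructor <;> rintro ⟨_, _, _⟩
  · exact this.2 ⟨by omega, by omega, by omega⟩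
  · exact this.1 ⟨by omega, by omega, by omega⟩

lemma KInj.neg {f : ℕ → ℤ} {s : Finset ℕ} (h : KInj f s) : KInj (fun i => - f i) s := by
  intro a ha b hb h1
  exact h a ha b hb (by simpa using h1)

lemma KSplit.of_neg {f : ℕ → ℤ} {s : Finset ℕ} (h : KSplit (fun i => - f i) s) : KSplit f s := by
  obtain ⟨t, h | h⟩ := h
  · exact ⟨t, Or.inr h⟩
  · exact ⟨t, Or.inl (by simpa using h)⟩

lemma k_aux (f : ℕ → ℤ) (s s' : Finset ℕ) (r : ℕ) (hr : r ∈ s) (hs : ∀ i, i ∈ s ↔ i = r ∨ i ∈ s')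
    (hmax : ∀ i ∈ s', i < r) (hav : KAv f s) (hinj : KInj f s)
    (IH : ∀ A : Finset ℕ, A ⊆ s' → 2 ≤ A.card → KSplit f A)
    (hup : ∃ t, KUp f s' t) : KSplit f s := by
  classical
  obtain ⟨t, ht, hmin⟩ : ∃ t, KUp f s' t ∧ ∀ t' < t, ¬ KUp f s' t' :=
    ⟨Nat.find hup, Nat.find_spec hup, fun t' h => Nat.find_min hup h⟩
  obtain ⟨⟨i0, hi0, hi0t⟩, ⟨j0, hj0, hj0t⟩, hlt⟩ := ht
  by_cases h1 : ∀ a ∈ s', a < t → f a < f r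
  · refine ⟨t, Or.inl ⟨⟨i0, (hs _).2 (Or.inr hi0), hi0t⟩, ⟨j0, (hs _).2 (Or.inr hj0), hj0t⟩, ?_⟩⟩
    intro i hi j hj hit htj
    have := hmax j0 hj0
    rcases (hs i).1 hi with rfl | hi
    · omega
    rcases (hs j).1 hj with rfl | hj
    · exact h1 i hi hit
    · exact hlt i hi j hj hit htj
  by_cases h2 : ∀ a ∈ s', a < t → f r < f a
  · refine ⟨r, Or.inr ⟨⟨i0, (hs _).2 (Or.inr hi0), hmax _ hi0⟩, ⟨r, hr, le_rfl⟩, ?_⟩⟩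
    intro i hi j hj hit htj
    have hi' : i ∈ s' := by
      rcases (hs i).1 hi with rfl | hi
      · omega
      · exact hi
    have hj' : j = r := by
      rcases (hs j).1 hj with rfl | hj
      · rfl
      · have := hmax j hj; omega
    subst hj'
    have : f j < f i := by
      by_cases h : i < t
      · exact h2 i hi' h
      · exact (h2 i0 hi0 hi0t).trans (hlt i0 hi0 i hi' hi0t (by omega))
    simpa using this
  exfalso
  push Not at h1 h2
  obtain ⟨p, hp, hpt, hpr⟩ := h1
  obtain ⟨q, hq, hqt, hqr⟩ := h2
  have hpr' : f r < f p := by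
    rcases hpr.lt_or_eq with h | h
    · exact h
    · have := hinj r hr p ((hs _).2 (Or.inr hp)) h
      have := hmax p hp
      omega
  have hqr' : f q < f r := by
    rcases hqr.lt_or_eq with h | h
    · exact h
    · have := hinj q ((hs _).2 (Or.inr hq)) r hr h
      have := hmax q hq
      omega
  have hpq : p ≠ q := by rintro rfl; omega
  have hcard : 2 ≤ (s'.filter (· < t)).card := by
    have : ({p, q} : Finset ℕ) ⊆ s'.filter (· < t) := by
      intro x hx
      simp only [Finset.mem_insert, Finset.mem_singleton] at hx
      rcases hx with rfl | rfl <;> simp [*]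
    have h := Finset.card_le_card this
    rwa [Finset.card_pair hpq] at h
  obtain ⟨t', h | h⟩ := IH _ (Finset.filter_subset _ _) hcard
  · obtain ⟨⟨i1, hi1, hi1t⟩, ⟨j1, hj1, hj1t⟩, hlt1⟩ := h
    simp only [Finset.mem_filter] at hi1 hj1 hlt1
    refine hmin t' (by omega) ⟨⟨i1, hi1.1, hi1t⟩, ⟨j1, hj1.1, hj1t⟩, ?_⟩
    intro i hi j hj hit htj
    by_cases hjt : j < t
    · exact hlt1 i ⟨hi, by omega⟩ j ⟨hj, hjt⟩ hit htj
    · exact hlt i hi j hj (by omega) (by omega)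
  · obtain ⟨⟨i1, hi1, hi1t⟩, ⟨j1, hj1, hj1t⟩, hlt1⟩ := h
    simp only [Finset.mem_filter] at hi1 hj1 hlt1
    have key : ∀ a ∈ s', ∀ b ∈ s', a < t → b < t → a < t' → t' ≤ b → f b < f r → f r < f a →
        False := by
      intro a ha b hb hat hbt hat' hbt' h3 h4
      have hm := hmax j0 hj0
      have := hlt a ha j0 hj0 hat hj0t
      exact (hav a ((hs _).2 (Or.inr ha)) b ((hs _).2 (Or.inr hb)) j0 ((hs _).2 (Or.inr hj0)) r hr
        (by omega) (by omega) hm).2 ⟨h3, h4, this⟩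
    by_cases hp' : p < t'
    · by_cases hq' : q < t'
      · have : -f q < -f j1 := hlt1 q ⟨hq, hqt⟩ j1 hj1 hq' hj1t
        exact key p hp j1 hj1.1 hpt hj1.2 hp' hj1t (by omega) hpr'
      · exact key p hp q hq hpt hqt hp' (by omega) hqr' hpr'
    · by_cases hq' : q < t'
      · have : -f q < -f p := hlt1 q ⟨hq, hqt⟩ p ⟨hp, hpt⟩ hq' (by omega)
        omega
      · have : -f i1 < -f p := hlt1 i1 hi1 p ⟨hp, hpt⟩ hi1t (by omega)
        exact key i1 hi1.1 q hq hi1.2 hqt hi1t (by omega) hqr' (by omega)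

lemma k_split : ∀ (m : ℕ) (s : Finset ℕ) (f : ℕ → ℤ), s.card = m → 2 ≤ m → KAv f s → KInj f s →
    KSplit f s := by
  intro m
  induction m using Nat.strong_induction_on with
  | _ m ih =>
  intro s f hm h2 hav hinj
  classical
  have hne : s.Nonempty := by rw [← Finset.card_pos]; omega
  set r := s.max' hne with hrdef
  have hr : r ∈ s := s.max'_mem hne
  have hc : (s.erase r).card = m - 1 := by rw [Finset.card_erase_of_mem hr, hm]
  have hmax : ∀ i ∈ s.erase r, i < r := fun i hi =>
    lt_of_le_of_ne (s.le_max' i (Finset.mem_of_mem_erase hi)) (Finset.ne_of_mem_erase hi)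
  have hs : ∀ i, i ∈ s ↔ i = r ∨ i ∈ s.erase r := by
    intro i
    by_cases h : i = r
    · subst h; simp [hr]
    · simp [h]
  have hsub : s.erase r ⊆ s := Finset.erase_subset _ _
  have IH : ∀ g : ℕ → ℤ, KAv g s → KInj g s → ∀ A : Finset ℕ, A ⊆ s.erase r → 2 ≤ A.card →
      KSplit g A := by
    intro g h3 h4 A hA hA2
    have := Finset.card_le_card hA
    exact ih A.card (by omega) A g rfl hA2 (h3.mono (hA.trans hsub)) (h4.mono (hA.trans hsub))
  by_cases h3 : m = 2
  · obtain ⟨a, ha⟩ := Finset.card_eq_one.1 (show (s.erase r).card = 1 by omega)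
    have har : a < r := hmax a (by simp [ha])
    have has : a ∈ s := (hs a).2 (Or.inr (by simp [ha]))
    have hs' : ∀ i ∈ s, i = r ∨ i = a := by
      intro i hi
      have := (hs i).1 hi
      rwa [ha, Finset.mem_singleton] at this
    have hfn : f a ≠ f r := fun h => har.ne (hinj a has r hr h)
    refine ⟨r, ?_⟩
    rcases lt_or_gt_of_ne hfn with h | h
    · refine Or.inl ⟨⟨a, has, har⟩, ⟨r, hr, le_rfl⟩, ?_⟩
      intro i hi j hj hit htj
      rcases hs' i hi with h1 | h1 <;> rcases hs' j hj with h2 | h2 <;> first | omega | (rw [h1, h2]; omega)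
    · refine Or.inr ⟨⟨a, has, har⟩, ⟨r, hr, le_rfl⟩, ?_⟩
      intro i hi j hj hit htj
      rcases hs' i hi with h1 | h1 <;> rcases hs' j hj with h2 | h2 <;> first | omega | (rw [h1, h2]; simpa using h)
  · obtain ⟨t, h | h⟩ := IH f hav hinj _ subset_rfl (by omega)
    · exact k_aux f s _ r hr hs hmax hav hinj (IH f hav hinj) ⟨t, h⟩
    · exact (k_aux _ s _ r hr hs hmax hav.neg hinj.neg (IH _ hav.neg hinj.neg) ⟨t, h⟩).of_neg

def KTwin (f : ℕ → ℤ) (s : Finset ℕ) : Prop :=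
  ∃ p ∈ s, ∃ q ∈ s, p < q ∧ ∀ r ∈ s, ¬ (p < r ∧ r < q) ∧ ¬ (f p < f r ∧ f r < f q) ∧
    ¬ (f q < f r ∧ f r < f p)

lemma KTwin.of_neg {f : ℕ → ℤ} {s : Finset ℕ} (h : KTwin (fun i => - f i) s) : KTwin f s := by
  obtain ⟨p, hp, q, hq, hpq, h⟩ := h
  refine ⟨p, hp, q, hq, hpq, fun r hr => ?_⟩
  have := h r hr
  simp only at this
  omega

lemma k_twin_aux (f : ℕ → ℤ) (s : Finset ℕ) (t : ℕ) (h : KUp f s t)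
    (IH : ∀ A : Finset ℕ, A ⊂ s → 2 ≤ A.card → KTwin f A) : KTwin f s := by
  classical
  obtain ⟨⟨i, hi, hit⟩, ⟨j, hj, hjt⟩, hlt⟩ := h
  by_cases hA : 2 ≤ (s.filter (· < t)).card
  · obtain ⟨p, hp, q, hq, hpq, h⟩ := IH _
      (Finset.filter_ssubset.2 ⟨j, hj, by omega⟩) hA
    simp only [Finset.mem_filter] at hp hq h
    refine ⟨p, hp.1, q, hq.1, hpq, fun r hr => ?_⟩
    by_cases hrt : r < t
    · exact h r ⟨hr, hrt⟩
    · have h1 := hlt p hp.1 r hr hp.2 (by omega)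
      have h2 := hlt q hq.1 r hr hq.2 (by omega)
      omega
  by_cases hB : 2 ≤ (s.filter (t ≤ ·)).card
  · obtain ⟨p, hp, q, hq, hpq, h⟩ := IH _
      (Finset.filter_ssubset.2 ⟨i, hi, by omega⟩) hB
    simp only [Finset.mem_filter] at hp hq h
    refine ⟨p, hp.1, q, hq.1, hpq, fun r hr => ?_⟩
    by_cases hrt : r < t
    · have h1 := hlt r hr p hp.1 hrt hp.2
      have h2 := hlt r hr q hq.1 hrt hq.2
      omega
    · exact h r ⟨hr, by omega⟩
  have hA' := Finset.card_le_one.1 (show (s.filter (· < t)).card ≤ 1 by omega)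
  have hB' := Finset.card_le_one.1 (show (s.filter (t ≤ ·)).card ≤ 1 by omega)
  simp only [Finset.mem_filter] at hA' hB'
  refine ⟨i, hi, j, hj, by omega, fun r hr => ?_⟩
  by_cases hrt : r < t
  · have := hA' r ⟨hr, hrt⟩ i ⟨hi, hit⟩
    subst this; omega
  · have := hB' r ⟨hr, by omega⟩ j ⟨hj, hjt⟩
    subst this; omega

lemma k_twin (s : Finset ℕ) : ∀ (f : ℕ → ℤ), 2 ≤ s.card → KAv f s → KInj f s → KTwin f s := by
  induction s using Finset.strongInduction with
  | _ s ih =>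
  intro f h2 hav hinj
  obtain ⟨t, h | h⟩ := k_split _ s f rfl h2 hav hinj
  · exact k_twin_aux f s t h fun A hA hA2 => ih A hA f hA2 (hav.mono hA.1) (hinj.mono hA.1)
  · exact (k_twin_aux _ s t h fun A hA hA2 =>
      ih A hA _ hA2 (hav.neg.mono hA.1) (hinj.neg.mono hA.1)).of_neg

lemma k_contains {n : ℕ} (τ : Equiv.Perm (Fin 4)) (π : Equiv.Perm (Fin n)) (a b c d : Fin n)
    (h1 : a < b) (h2 : b < c) (h3 : c < d)
    (h : ∀ x y : Fin 4, τ x < τ y ↔ π (![a, b, c, d] x) < π (![a, b, c, d] y)) :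
    Contains τ π := by
  refine ⟨OrderEmbedding.ofStrictMono ![a, b, c, d] ?_, h⟩
  rw [Fin.strictMono_iff_lt_succ]
  intro i
  fin_cases i
  · exact h1
  · exact h2
  · exact h3

/-- every king permutation of length `n ≥ 4` contains [2413] or [3142]. -/
theorem every_king_contains_2413_or_3142 (n : ℕ) (hn : 4 ≤ n)
    (π : Equiv.Perm (Fin n)) (hπ : IsKing π) :
    Contains p2413 π ∨ Contains p3142 π := by
  by_contra hcon
  push Not at hcon
  obtain ⟨hc1, hc2⟩ := hcon
  let f : ℕ → ℤ := fun i => if h : i < n then ((π ⟨i, h⟩ : Fin n) : ℕ) else 0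
  have hf : ∀ (i : ℕ) (h : i < n), f i = ((π ⟨i, h⟩ : Fin n) : ℕ) := fun i h => by simp [f, h]
  have hinj : KInj f (Finset.range n) := by
    intro a ha b hb hab
    rw [Finset.mem_range] at ha hb
    rw [hf a ha, hf b hb] at hab
    have h1 : π ⟨a, ha⟩ = π ⟨b, hb⟩ := Fin.ext (by exact_mod_cast hab)
    simpa using π.injective h1
  have hav : KAv f (Finset.range n) := by
    intro a ha b hb c hc d hd h1 h2 h3
    rw [Finset.mem_range] at ha hb hc hd
    rw [hf a ha, hf b hb, hf c hc, hf d hd]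
    constructor
    · rintro ⟨h4, h5, h6⟩
      apply hc1
      refine k_contains _ _ ⟨a, ha⟩ ⟨b, hb⟩ ⟨c, hc⟩ ⟨d, hd⟩ h1 h2 h3 ?_
      intro x y
      fin_cases x <;> fin_cases y <;> simp [p2413] <;> omega
    · rintro ⟨h4, h5, h6⟩
      apply hc2
      refine k_contains _ _ ⟨a, ha⟩ ⟨b, hb⟩ ⟨c, hc⟩ ⟨d, hd⟩ h1 h2 h3 ?_
      intro x y
      fin_cases x <;> fin_cases y <;> simp [p3142] <;> omega
  obtain ⟨p, hp, q, hq, hpq, h⟩ := k_twin (Finset.range n) f (by simp; omega) hav hinj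
  have hne : f p ≠ f q := fun e => hpq.ne (hinj p hp q hq e)
  rw [Finset.mem_range] at hp hq
  have hq1 : q = p + 1 := by
    by_contra hne
    exact (h (p + 1) (by rw [Finset.mem_range]; omega)).1 ⟨by omega, by omega⟩
  refine hπ ⟨p, hp⟩ ⟨q, hq⟩ hq1 ?_
  have hv : ∀ v : ℕ, v < n → ∃ r ∈ Finset.range n, f r = v := by
    intro v hv
    refine ⟨(π.symm ⟨v, hv⟩ : Fin n), by simp, ?_⟩
    rw [hf _ (Fin.is_lt _)]
    simp
  rw [hf p hp, hf q hq] at hne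
  unfold fdist
  have b1 := (π ⟨p, hp⟩).is_lt
  have b2 := (π ⟨q, hq⟩).is_lt
  rcases lt_or_gt_of_ne hne with hl | hl
  · by_contra hd
    obtain ⟨r, hr, hr'⟩ := hv ((π ⟨p, hp⟩ : ℕ) + 1) (by omega)
    have := (h r hr).2.1
    rw [hf p hp, hf q hq, hr'] at this
    push_cast at this
    omega
  · by_contra hd
    obtain ⟨r, hr, hr'⟩ := hv ((π ⟨q, hq⟩ : ℕ) + 1) (by omega)
    have := (h r hr).2.2
    rw [hf p hp, hf q hq, hr'] at this
    push_cast at this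
    omega
end

section
/- Let σ ∈ K_n and let 1 ≤ j < i ≤ n. If ∇_j(∇_i(σ)) ∈ K_{n−2} but ∇_i(σ) ∉ K_{n−1} and ∇_j(σ) ∉ K_{n−1}, then there exists an index k such that σ(i) separates σ(j) from σ(k), and there exists an index k′ such that σ(j) separates σ(i) from σ(k′). -/
open Equiv

theorem sa_nat {n : ℕ} (p : Fin (n + 1)) (x : Fin n) :
    ((x : ℕ) < p ∧ ((p.succAbove x : Fin (n + 1)) : ℕ) = x) ∨
    ((p : ℕ) ≤ x ∧ ((p.succAbove x : Fin (n + 1)) : ℕ) = x + 1) := by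
  rcases lt_or_ge (x : ℕ) (p : ℕ) with h | h
  · left
    refine ⟨h, ?_⟩
    rw [Fin.succAbove_of_castSucc_lt _ _ (by simpa [Fin.lt_def] using h)]
    rfl
  · right
    refine ⟨h, ?_⟩
    rw [Fin.succAbove_of_le_castSucc _ _ (by simpa [Fin.le_def] using h)]
    rfl

theorem nabla_key {n : ℕ} (σ : Equiv.Perm (Fin (n + 1))) (i : Fin (n + 1)) (x : Fin n) :
    σ (i.succAbove x) = (σ i).succAbove (nabla σ i x) := by
  have hne : σ (i.succAbove x) ≠ σ i := fun h => Fin.succAbove_ne i x (σ.injective h)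
  obtain ⟨y, hy⟩ := Fin.exists_succAbove_eq hne
  have h := Equiv.removeNone_some ((finSuccEquiv' i).symm.trans (σ.trans (finSuccEquiv' (σ i))))
    (x := x) ⟨y, by simp [← hy]⟩
  have h' : some (nabla σ i x) = some y := by
    unfold nabla
    rw [h]
    simp [← hy]
  rw [← hy, Option.some.inj h']

theorem sep_of_not_king {n : ℕ} (σ : Equiv.Perm (Fin (n + 1))) (hσ : IsKing σ) (i : Fin (n + 1))
    (hi : ¬ IsKing (nabla σ i)) :
    ∃ a b, Separates σ i a b := by
  unfold IsKing at hi
  push Not at hi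
  obtain ⟨x, y, hxy, hd⟩ := hi
  have kx := nabla_key σ i x
  have ky := nabla_key σ i y
  have h1 := sa_nat i x
  have h2 := sa_nat i y
  have h3 := sa_nat (σ i) (nabla σ i x)
  have h4 := sa_nat (σ i) (nabla σ i y)
  rw [← kx] at h3
  rw [← ky] at h4
  refine ⟨i.succAbove x, i.succAbove y, ?_⟩
  have n1 := hσ (i.succAbove x) (i.succAbove y)
  have n2 := hσ (i.succAbove x) i
  have e1 : i ≠ i.succAbove x := (Fin.succAbove_ne i x).symm
  have e2 : i ≠ i.succAbove y := (Fin.succAbove_ne i y).symm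
  have e3 : i.succAbove x ≠ i.succAbove y := by
    intro h
    have := Fin.succAbove_right_injective h
    subst this
    omega
  unfold fdist at hd n1 n2
  have hd' : (nabla σ i y : ℕ) = nabla σ i x + 1 ∨ (nabla σ i x : ℕ) = nabla σ i y + 1 := by omega
  clear hd kx ky
  generalize nabla σ i x = A at *
  generalize nabla σ i y = B at *
  by_cases hv : (x : ℕ) < i ∧ (i : ℕ) ≤ y
  · left
    have g1 : (i.succAbove x : ℕ) = x := by clear n1 n2 h3 h4 hd'; omega
    have g2 : (i.succAbove y : ℕ) = y + 1 := by clear n1 n2 h3 h4 hd'; omega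
    have n3 := n2 (by clear n1 n2 h3 h4 hd'; omega)
    clear n1 n2 h1 h2
    refine ⟨e1, e2, e3, ?_, ?_, ?_⟩ <;> unfold fdist
    · omega
    · omega
    · rcases hd' with hd' | hd' <;> rcases h3 with h3 | h3 <;> rcases h4 with h4 | h4 <;> omega
  · right
    have g1 : (i.succAbove y : ℕ) = i.succAbove x + 1 := by clear n1 n2 h3 h4 hd'; omega
    have n3 := n1 g1
    clear n1 n2 h1 h2
    refine ⟨e1, e2, e3, ?_, ?_, ?_⟩ <;> unfold fdist
    · rcases hd' with hd' | hd' <;> rcases h3 with h3 | h3 <;> rcases h4 with h4 | h4 <;> omega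
    · rcases hd' with hd' | hd' <;> rcases h3 with h3 | h3 <;> rcases h4 with h4 | h4 <;> omega
    · omega

theorem sep_symm {n : ℕ} {σ : Equiv.Perm (Fin n)} {i a b : Fin n} (h : Separates σ i a b) :
    Separates σ i b a := by
  unfold Separates VSep HSep fdist at *
  rcases h with ⟨h1, h2, h3, h4, h5, h6⟩ | ⟨h1, h2, h3, h4, h5, h6⟩
  · left
    refine ⟨h2, h1, h3.symm, h5, h4, by omega⟩
  · right
    refine ⟨h2, h1, h3.symm, h5, h4, by omega⟩

theorem sa_L1 {n : ℕ} (p : Fin (n + 1)) (u v : Fin n)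
    (h : fdist (p.succAbove u) (p.succAbove v) = 1) : fdist u v = 1 := by
  have hne : (u : ℕ) ≠ v := by
    intro h'
    rw [Fin.ext h'] at h
    simp [fdist] at h
  have h1 := sa_nat p u
  have h2 := sa_nat p v
  unfold fdist at *
  omega

theorem sa_L2 {n : ℕ} (p : Fin (n + 1)) (u v : Fin n) (huv : u ≠ v)
    (h : fdist p (p.succAbove u) = 1) (h' : fdist p (p.succAbove v) = 1) : fdist u v = 1 := by
  have hne : (u : ℕ) ≠ v := fun e => huv (Fin.ext e)
  have h1 := sa_nat p u
  have h2 := sa_nat p v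
  unfold fdist at *
  omega

theorem double_contra {n : ℕ} (σ : Equiv.Perm (Fin (n + 2)))
    (i j : Fin (n + 2)) (j' : Fin (n + 1)) (hj : i.succAbove j' = j)
    (h2 : IsKing (nabla (nabla σ i) j')) (a b : Fin (n + 2))
    (hai : a ≠ i) (haj : a ≠ j) (hbi : b ≠ i) (hbj : b ≠ j)
    (hs : Separates σ i a b ∨ Separates σ j a b) : False := by
  obtain ⟨x, rfl⟩ := Fin.exists_succAbove_eq hai
  obtain ⟨y, rfl⟩ := Fin.exists_succAbove_eq hbi
  have hx : x ≠ j' := by rintro rfl; exact haj hj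
  have hy : y ≠ j' := by rintro rfl; exact hbj hj
  obtain ⟨u, rfl⟩ := Fin.exists_succAbove_eq hx
  obtain ⟨v, rfl⟩ := Fin.exists_succAbove_eq hy
  have k1 := nabla_key σ i (j'.succAbove u)
  have k2 := nabla_key σ i (j'.succAbove v)
  have k3 := nabla_key σ i j'
  have k4 := nabla_key (nabla σ i) j' u
  have k5 := nabla_key (nabla σ i) j' v
  have huv : u ≠ v := by
    rintro rfl
    rcases hs with (h | h) | (h | h) <;> exact h.2.2.1 rfl
  have hxy : j'.succAbove u ≠ j'.succAbove v := fun h => huv (Fin.succAbove_right_injective h)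
  have hxy2 : nabla σ i (j'.succAbove u) ≠ nabla σ i (j'.succAbove v) :=
    fun h => hxy ((nabla σ i).injective h)
  have huv2 : nabla (nabla σ i) j' u ≠ nabla (nabla σ i) j' v :=
    fun h => huv ((nabla (nabla σ i) j').injective h)
  have main : fdist u v = 1 ∧ fdist (nabla (nabla σ i) j' u) (nabla (nabla σ i) j' v) = 1 := by
    subst hj
    unfold Separates VSep HSep at hs
    rw [k1, k2, k3] at hs
    rcases hs with (h | h) | (h | h) <;> obtain ⟨-, -, -, h4, h5, h6⟩ := h
    · have q := sa_L1 _ _ _ h6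
      rw [k4, k5] at q
      exact ⟨sa_L1 _ _ _ (sa_L2 _ _ _ hxy h4 h5), sa_L1 _ _ _ q⟩
    · have q := sa_L2 _ _ _ hxy2 h4 h5
      rw [k4, k5] at q
      exact ⟨sa_L1 _ _ _ (sa_L1 _ _ _ h6), sa_L1 _ _ _ q⟩
    · have q := sa_L1 _ _ _ h6
      rw [k4, k5] at q
      exact ⟨sa_L2 _ _ _ huv (sa_L1 _ _ _ h4) (sa_L1 _ _ _ h5), sa_L1 _ _ _ q⟩
    · have q := sa_L1 _ _ _ h4
      have r := sa_L1 _ _ _ h5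
      rw [k4] at q
      rw [k5] at r
      exact ⟨sa_L1 _ _ _ (sa_L1 _ _ _ h6), sa_L2 _ _ _ huv2 q r⟩
  obtain ⟨m1, m2⟩ := main
  have c1 := h2 u v
  have c2 := h2 v u
  unfold fdist at *
  omega

/-- if `∇_j(∇_i(σ))` is a king but neither `∇_i(σ)` nor `∇_j(σ)` is,
then `σ i` separates `σ j` from some element and `σ j` separates `σ i` from some element. -/
theorem separators_of_double_deletion (n : ℕ) (σ : Equiv.Perm (Fin (n + 2))) (hσ : IsKing σ)
    (i j : Fin (n + 2)) (hji : (j : ℕ) < (i : ℕ))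
    (h2 : IsKing (nabla (nabla σ i) ⟨(j : ℕ), by have := i.isLt; omega⟩))
    (hi : ¬ IsKing (nabla σ i)) (hj : ¬ IsKing (nabla σ j)) :
    (∃ k, Separates σ i j k) ∧ (∃ k', Separates σ j i k') := by
  have hjj : i.succAbove ⟨(j : ℕ), by have := i.isLt; omega⟩ = j := by
    apply Fin.ext
    have := sa_nat i ⟨(j : ℕ), by have := i.isLt; omega⟩
    simp only at this
    omega
  have dc := double_contra σ i j _ hjj h2
  have hne : i ≠ j := by rintro rfl; omega
  have ne : ∀ (p a b : Fin (n + 2)), Separates σ p a b → a ≠ p ∧ b ≠ p := by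
    rintro p a b (h | h) <;> exact ⟨h.1.symm, h.2.1.symm⟩
  constructor
  · obtain ⟨a, b, h⟩ := sep_of_not_king σ hσ i hi
    obtain ⟨h1, h3⟩ := ne _ _ _ h
    by_cases ha : a = j
    · subst ha; exact ⟨b, h⟩
    by_cases hb : b = j
    · subst hb; exact ⟨a, sep_symm h⟩
    exact (dc a b h1 ha h3 hb (Or.inl h)).elim
  · obtain ⟨a, b, h⟩ := sep_of_not_king σ hσ j hj
    obtain ⟨h1, h3⟩ := ne _ _ _ h
    by_cases ha : a = i
    · subst ha; exact ⟨b, h⟩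
    by_cases hb : b = i
    · subst hb; exact ⟨a, sep_symm h⟩
    exact (dc a b ha h1 hb h3 (Or.inr h)).elim
end

section
/- Let σ ∈ K_n and let i ≠ j be indices. Suppose σ(i) separates σ(j) from σ(k) for some index k, and σ(j) separates σ(i) from σ(k′) for some index k′. Then these two separations are of the same type: either both are vertical separations, or both are horizontal separations. -/
open Equiv

/-- mutual separators in a king permutation are of the same type. -/
theorem separators_same_type (n : ℕ) (σ : Equiv.Perm (Fin n)) (hσ : IsKing σ)
    (i j k k' : Fin n) (hij : i ≠ j)
    (h1 : Separates σ i j k) (h2 : Separates σ j i k') :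
    (VSep σ i j k ∧ VSep σ j i k') ∨ (HSep σ i j k ∧ HSep σ j i k') := by
  have key : fdist i j = 1 → fdist (σ i) (σ j) = 1 → False := by
    intro ha hb
    have h3 := hσ i j
    have h4 := hσ j i
    unfold fdist at *
    omega
  have symm : ∀ a b : Fin n, fdist a b = fdist b a := by
    intro a b
    unfold fdist
    omega
  rcases h1 with h1 | h1 <;> rcases h2 with h2 | h2
  · exact Or.inl ⟨h1, h2⟩
  · exact (key h1.2.2.2.1 ((symm _ _).trans h2.2.2.2.1)).elim
  · exact (key ((symm _ _).trans h2.2.2.2.1) h1.2.2.2.1).elim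
  · exact Or.inr ⟨h1, h2⟩
end

section
/- Let σ be a permutation of length n and suppose σ(i) separates σ(j) from σ(k) where j < i < k. Then ∇_j(∇_i(σ)) = ∇_i(∇_k(σ)). -/
open Equiv

theorem nabla_spec {n : ℕ} (σ : Equiv.Perm (Fin (n + 1))) (i : Fin (n + 1)) (x : Fin n) :
    (σ i).succAbove (nabla σ i x) = σ (i.succAbove x) := by
  have h : some (nabla σ i x) =
      ((finSuccEquiv' i).symm.trans (σ.trans (finSuccEquiv' (σ i)))) (some x) := by
    unfold nabla
    apply Equiv.removeNone_some
    have hne : σ (i.succAbove x) ≠ σ i := fun h => Fin.succAbove_ne i x (σ.injective h)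
    obtain ⟨y, hy⟩ := Fin.exists_succAbove_eq hne
    exact ⟨y, by simp [← hy]⟩
  have h2 := congrArg (finSuccEquiv' (σ i)).symm h
  simpa using h2

theorem succAbove_nat {n : ℕ} (i : Fin (n + 1)) (x : Fin n) :
    ((i.succAbove x : Fin (n + 1)) : ℕ) = if (x : ℕ) < i then (x : ℕ) else x + 1 := by
  simp only [Fin.succAbove, Fin.lt_def, Fin.val_castSucc]
  split_ifs <;> simp

theorem nabla_nat {n : ℕ} (σ : Equiv.Perm (Fin (n + 1))) (i : Fin (n + 1)) (x : Fin n)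
    (u : Fin (n + 1)) (hu : (u : ℕ) = if (x : ℕ) < i then (x : ℕ) else x + 1) :
    (σ u : ℕ) = if (nabla σ i x : ℕ) < σ i then (nabla σ i x : ℕ) else nabla σ i x + 1 := by
  have : u = i.succAbove x := Fin.ext (by rw [hu, succAbove_nat])
  rw [this, ← nabla_spec, succAbove_nat]

/-- if `σ i` separates `σ j` from `σ k` with `j < i < k`,
then `∇_j(∇_i(σ)) = ∇_i(∇_k(σ))`. -/
theorem nabla_separator_right (n : ℕ) (σ : Equiv.Perm (Fin (n + 2))) (i j k : Fin (n + 2))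
    (hji : (j : ℕ) < (i : ℕ)) (hik : (i : ℕ) < (k : ℕ)) (hsep : Separates σ i j k) :
    nabla (nabla σ i) ⟨(j : ℕ), by have := i.isLt; omega⟩
      = nabla (nabla σ k) ⟨(i : ℕ), by have := k.isLt; omega⟩ := by
  have hi := i.isLt
  have hk := k.isLt
  rcases hsep with ⟨-, -, -, h1, h2, h3⟩ | ⟨-, -, -, h1, h2, h3⟩
  swap
  · unfold fdist at h3; omega
  unfold fdist at h1 h2 h3
  have inj : ∀ a b : Fin (n + 2), (a : ℕ) ≠ b → (σ a : ℕ) ≠ σ b := fun a b h h' =>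
    h (congrArg Fin.val (σ.injective (Fin.ext h')))
  ext x
  have hx := x.isLt
  set j' : Fin (n + 1) := ⟨(j : ℕ), by omega⟩ with hj'
  set i' : Fin (n + 1) := ⟨(i : ℕ), by omega⟩ with hi'
  have vj : (j' : ℕ) = j := rfl
  have vi : (i' : ℕ) = i := rfl
  have A := nabla_nat σ i j' j (by rw [vj, if_pos hji])
  have B := nabla_nat σ k i' i (by rw [vi, if_pos hik])
  have vz := succAbove_nat j' x
  have vw := succAbove_nat i' x
  have C := nabla_nat (nabla σ i) j' x _ vz
  have D := nabla_nat (nabla σ k) i' x _ vw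
  have vz2 := succAbove_nat i (j'.succAbove x)
  have vw2 := succAbove_nat k (i'.succAbove x)
  have E := nabla_nat σ i (j'.succAbove x) _ vz2
  have F := nabla_nat σ k (i'.succAbove x) _ vw2
  have hij := inj i j (by omega)
  have hik' := inj i k (by omega)
  by_cases hxj : (x : ℕ) = j
  · have e1 : i.succAbove (j'.succAbove x) = k := Fin.ext (by
      rw [vz2, vz, vj]; split_ifs <;> omega)
    have e2 : k.succAbove (i'.succAbove x) = j := Fin.ext (by
      rw [vw2, vw, vi]; split_ifs <;> omega)
    rw [e1] at E
    rw [e2] at F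
    clear vz vw vz2 vw2 e1 e2
    split_ifs at A B C D E F <;> omega
  · have e : i.succAbove (j'.succAbove x) = k.succAbove (i'.succAbove x) := Fin.ext (by
      rw [vz2, vw2, vz, vw, vi, vj]; split_ifs <;> omega)
    have n1 := inj (i.succAbove (j'.succAbove x)) i (by
      rw [vz2, vz, vj]; split_ifs <;> omega)
    have n2 := inj (i.succAbove (j'.succAbove x)) j (by
      rw [vz2, vz, vj]; split_ifs <;> omega)
    have n3 := inj (i.succAbove (j'.succAbove x)) k (by
      rw [vz2, vz, vj]; split_ifs <;> omega)
    rw [← e] at F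
    clear vz vw vz2 vw2 e
    split_ifs at A B C D E F <;> omega
end

section
/- Let σ be a permutation of length n and suppose σ(i) separates σ(j) from σ(k) where i > j > k. Then ∇_j(∇_i(σ)) = ∇_k(∇_i(σ)). -/
open Equiv

theorem nabla_succAbove_aux {n : ℕ} (σ : Equiv.Perm (Fin (n + 1))) (i : Fin (n + 1)) (a : Fin n) :
    (σ i).succAbove (nabla σ i a) = σ (i.succAbove a) := by
  have hne : σ (i.succAbove a) ≠ σ i := fun h => Fin.succAbove_ne i a (σ.injective h)
  obtain ⟨b, hb⟩ := Fin.exists_succAbove_eq hne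
  have h1 : some (nabla σ i a) = some b := by
    unfold nabla
    rw [Equiv.removeNone_some]
    · simp [← hb]
    · exact ⟨b, by simp [← hb]⟩
  rw [Option.some.inj h1, hb]

theorem nabla_val_aux {n : ℕ} (σ : Equiv.Perm (Fin (n + 1))) (i : Fin (n + 1)) (a : Fin n)
    (c : Fin (n + 1)) (hc : i.succAbove a = c) :
    (c ≠ i) ∧ (((σ c : ℕ) < σ i ∧ (nabla σ i a : ℕ) = σ c) ∨
      ((σ i : ℕ) < σ c ∧ (nabla σ i a : ℕ) + 1 = σ c)) := by
  have h := nabla_succAbove_aux σ i a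
  refine ⟨hc ▸ Fin.succAbove_ne i a, ?_⟩
  rw [hc] at h
  rw [← h]
  unfold Fin.succAbove
  split_ifs with h1 <;> simp [Fin.lt_def] at h1 ⊢ <;> omega

theorem nabla_block_aux {n : ℕ} (τ : Equiv.Perm (Fin (n + 1))) (j k : Fin (n + 1))
    (hjk : (j : ℕ) = k + 1) (hv : (τ j : ℕ) = τ k + 1 ∨ (τ k : ℕ) = τ j + 1) :
    nabla τ j = nabla τ k := by
  ext a
  by_cases hak : (a : ℕ) = k
  · have h1 := nabla_val_aux τ j a k (by
      rw [Fin.succAbove_of_castSucc_lt _ _ (by simp [Fin.lt_def]; omega)]; ext; simpa using hak)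
    have h2 := nabla_val_aux τ k a j (by
      rw [Fin.succAbove_of_le_castSucc _ _ (by simp [Fin.le_def]; omega)]; ext; simp; omega)
    omega
  · have key : j.succAbove a = k.succAbove a := by
      ext
      unfold Fin.succAbove
      simp only [Fin.lt_def, Fin.val_castSucc]
      split_ifs <;> simp <;> omega
    have h1 := nabla_val_aux τ j a _ rfl
    have h2 := nabla_val_aux τ k a _ key.symm
    omega

/-- if `σ i` separates `σ j` from `σ k` with `i > j > k`,
then `∇_j(∇_i(σ)) = ∇_k(∇_i(σ))`. -/
theorem nabla_separator_left (n : ℕ) (σ : Equiv.Perm (Fin (n + 2))) (i j k : Fin (n + 2))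
    (hkj : (k : ℕ) < (j : ℕ)) (hji : (j : ℕ) < (i : ℕ)) (hsep : Separates σ i j k) :
    nabla (nabla σ i) ⟨(j : ℕ), by have := i.isLt; omega⟩
      = nabla (nabla σ i) ⟨(k : ℕ), by have := i.isLt; omega⟩ := by
  have hj := nabla_val_aux σ i ⟨(j : ℕ), by have := i.isLt; omega⟩ j (by
    rw [Fin.succAbove_of_castSucc_lt _ _ (by simp only [Fin.lt_def, Fin.val_castSucc]; omega)]; ext; simp)
  have hk := nabla_val_aux σ i ⟨(k : ℕ), by have := i.isLt; omega⟩ k (by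
    rw [Fin.succAbove_of_castSucc_lt _ _ (by simp only [Fin.lt_def, Fin.val_castSucc]; omega)]; ext; simp)
  have hne : (σ j : ℕ) ≠ σ k := fun h => by
    have := σ.injective (Fin.ext h)
    omega
  rcases hsep with ⟨_, _, _, h1, h2, _⟩ | ⟨_, _, _, h1, h2, h3⟩
  · unfold fdist at h1 h2
    omega
  · unfold fdist at h1 h2 h3
    apply nabla_block_aux
    · simp only
      omega
    · omega
end

section
/- Let σ ∈ K_n with n > 4, and let π ∈ K_{n−2} be such that π ≺ σ. Then there exists τ ∈ K_{n−1} such that π ≺ τ ≺ σ. -/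
open Equiv

theorem sA_val {n : ℕ} (a : Fin (n+1)) (i : Fin n) :
    ((a.succAbove i : Fin (n+1)) : ℕ) = if (i:ℕ) < (a:ℕ) then (i:ℕ) else (i:ℕ) + 1 := by
  unfold Fin.succAbove
  simp only [Fin.lt_def, Fin.val_castSucc]
  split_ifs <;> simp

theorem exists_del {n : ℕ} (σ : Equiv.Perm (Fin (n+1))) (a : Fin (n+1)) :
    ∃ τ : Equiv.Perm (Fin n), ∀ i, (σ a).succAbove (τ i) = σ (a.succAbove i) := by
  have h : ∀ i : Fin n, ∃ j, (σ a).succAbove j = σ (a.succAbove i) := fun i =>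
    Fin.exists_succAbove_eq (fun h => Fin.succAbove_ne a i (σ.injective h))
  choose g hg using h
  have hinj : Function.Injective g := by
    intro x y hxy
    have : σ (a.succAbove x) = σ (a.succAbove y) := by rw [← hg, ← hg, hxy]
    exact Fin.succAbove_right_injective (σ.injective this)
  exact ⟨Equiv.ofBijective g (Finite.injective_iff_bijective.mp hinj), hg⟩

/-- `f` embeds `π` in `σ`. -/
def Pat {m n : ℕ} (π : Equiv.Perm (Fin m)) (σ : Equiv.Perm (Fin n)) (f : Fin m ↪o Fin n) : Prop :=
  ∀ a b : Fin m, π a < π b ↔ σ (f a) < σ (f b)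

theorem pat_del {m n : ℕ} {π : Equiv.Perm (Fin m)} {σ : Equiv.Perm (Fin (n+1))}
    {f : Fin m ↪o Fin (n+1)} (hf : Pat π σ f) {a : Fin (n+1)} (ha : ∀ x, f x ≠ a)
    {τ : Equiv.Perm (Fin n)} (hτ : ∀ i, (σ a).succAbove (τ i) = σ (a.succAbove i)) :
    Contains π τ := by
  have h : ∀ i, ∃ j, a.succAbove j = f i := fun i => Fin.exists_succAbove_eq (ha i)
  choose g hg using h
  have hm : StrictMono g := by
    intro x y hxy
    have := f.strictMono hxy
    rw [← hg, ← hg] at this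
    exact (Fin.strictMono_succAbove a).lt_iff_lt.mp this
  refine ⟨OrderEmbedding.ofStrictMono g hm, fun x y => ?_⟩
  rw [hf x y, ← hg, ← hg, ← hτ, ← hτ]
  exact (Fin.strictMono_succAbove _).lt_iff_lt

theorem del_contains {n : ℕ} {σ : Equiv.Perm (Fin (n+1))} {a : Fin (n+1)}
    {τ : Equiv.Perm (Fin n)} (hτ : ∀ i, (σ a).succAbove (τ i) = σ (a.succAbove i)) :
    Contains τ σ := by
  refine ⟨Fin.succAboveOrderEmb a, fun x y => ?_⟩
  rw [Fin.succAboveOrderEmb_apply, Fin.succAboveOrderEmb_apply, ← hτ, ← hτ]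
  exact (Fin.strictMono_succAbove _).lt_iff_lt.symm

theorem mem_range_of {N : ℕ} (f : Fin N ↪o Fin (N+2)) {a b : Fin (N+2)} (hab : a ≠ b)
    (ha : ∀ x, f x ≠ a) (hb : ∀ x, f x ≠ b) (u : Fin (N+2)) (hua : u ≠ a) (hub : u ≠ b) :
    ∃ x, f x = u := by
  by_contra! h
  have h1 : ({a, b, u} : Finset (Fin (N+2))) ⊆ (Finset.univ.map f.toEmbedding)ᶜ := by
    intro x hx
    simp only [Finset.mem_insert, Finset.mem_singleton] at hx
    simp only [Finset.mem_compl, Finset.mem_map, Finset.mem_univ, true_and, not_exists]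
    rcases hx with rfl | rfl | rfl
    · exact ha
    · exact hb
    · exact h
  have h2 := Finset.card_le_card h1
  rw [Finset.card_compl, Finset.card_map, Finset.card_eq_three.mpr
    ⟨a, b, u, hab, hua.symm, hub.symm, rfl⟩] at h2
  simp at h2

set_option maxHeartbeats 4000000 in
theorem sep_of_not_king_s8 {N : ℕ} {σ : Equiv.Perm (Fin (N+2))} (hσ : IsKing σ)
    {π : Equiv.Perm (Fin N)} (hπ : IsKing π) {f : Fin N ↪o Fin (N+2)} (hf : Pat π σ f)
    {a b : Fin (N+2)} (hab : a ≠ b) (ha : ∀ x, f x ≠ a) (hb : ∀ x, f x ≠ b)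
    {τ : Equiv.Perm (Fin (N+1))} (hτ : ∀ i, (σ a).succAbove (τ i) = σ (a.succAbove i))
    (hk : ¬ IsKing τ) :
    ∃ k, k ≠ a ∧ k ≠ b ∧ ((fdist a b = 1 ∧ fdist a k = 1 ∧ fdist (σ b) (σ k) = 1) ∨
      (fdist (σ a) (σ b) = 1 ∧ fdist (σ a) (σ k) = 1 ∧ fdist b k = 1)) := by
  unfold IsKing at hk
  push Not at hk
  obtain ⟨i, j, hij, hd⟩ := hk
  set u := a.succAbove i with hu
  set v := a.succAbove j with hv
  have hua : u ≠ a := Fin.succAbove_ne a i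
  have hva : v ≠ a := Fin.succAbove_ne a j
  have huv : u ≠ v := by
    intro h
    have := Fin.succAbove_right_injective h
    subst this; omega
  have eu := sA_val a i
  have ev := sA_val a j
  have su := sA_val (σ a) (τ i)
  have sv := sA_val (σ a) (τ j)
  rw [hτ, ← hu] at su
  rw [hτ, ← hv] at sv
  rw [← hu] at eu
  rw [← hv] at ev
  have key : u = b ∨ v = b := by
    by_contra! hne
    obtain ⟨x, hx⟩ := mem_range_of f hab ha hb u hua hne.1
    obtain ⟨y, hy⟩ := mem_range_of f hab ha hb v hva hne.2
    have hxy : x < y := by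
      rw [← f.lt_iff_lt, hx, hy, Fin.lt_def]; split_ifs at eu ev <;> omega
    have hxy1 : (y:ℕ) = x + 1 := by
      by_contra hne1
      have hlt : (x:ℕ) + 1 < y := by rw [Fin.lt_def] at hxy; omega
      have hy2 := y.2
      let z : Fin N := ⟨x+1, by omega⟩
      have h1 : f x < f z := f.strictMono (by rw [Fin.lt_def]; simp [z])
      have h2 : f z < f y := f.strictMono (by rw [Fin.lt_def]; exact hlt)
      have h3 := ha z
      rw [hx, Fin.lt_def] at h1
      rw [hy, Fin.lt_def] at h2
      rw [Ne, Fin.ext_iff] at h3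
      split_ifs at eu ev <;> omega
    have hbt : ∀ w, ¬ (σ u < σ (f w) ∧ σ (f w) < σ v) ∧ ¬ (σ v < σ (f w) ∧ σ (f w) < σ u) := by
      intro w
      have h3 : σ (f w) ≠ σ a := fun h => ha w (σ.injective h)
      rw [Ne, Fin.ext_iff] at h3
      simp only [Fin.lt_def]
      unfold fdist at hd
      split_ifs at su sv <;> omega
    apply hπ x y hxy1
    have hne' : π x ≠ π y := fun h => by
      have := π.injective h
      subst this; omega
    rw [Ne, Fin.ext_iff] at hne'
    by_contra hbad
    unfold fdist at hbad
    have hX := (π x).2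
    have hY := (π y).2
    rcases lt_or_gt_of_ne hne' with hlt | hlt
    · let z : Fin N := ⟨π x + 1, by omega⟩
      have h1 : π x < π (π.symm z) := by rw [Equiv.apply_symm_apply, Fin.lt_def]; simp [z]
      have h2 : π (π.symm z) < π y := by
        rw [Equiv.apply_symm_apply, Fin.lt_def]; simp only [z]; omega
      rw [hf, hx] at h1
      rw [hf, hy] at h2
      exact (hbt _).1 ⟨h1, h2⟩
    · let z : Fin N := ⟨π y + 1, by omega⟩
      have h1 : π y < π (π.symm z) := by rw [Equiv.apply_symm_apply, Fin.lt_def]; simp [z]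
      have h2 : π (π.symm z) < π x := by
        rw [Equiv.apply_symm_apply, Fin.lt_def]; simp only [z]; omega
      rw [hf, hy] at h1
      rw [hf, hx] at h2
      exact (hbt _).2 ⟨h1, h2⟩
  have k1 := hσ u v
  have k2 := hσ u a
  unfold fdist at *
  rcases key with h | h
  · refine ⟨v, hva, fun h' => huv (h.trans h'.symm), ?_⟩
    rw [← h]
    split_ifs at eu ev su sv <;> omega
  · refine ⟨u, hua, fun h' => huv (h'.trans h.symm), ?_⟩
    rw [← h]
    split_ifs at eu ev su sv <;> omega

theorem shift_pat {N : ℕ} {σ : Equiv.Perm (Fin (N+2))}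
    {π : Equiv.Perm (Fin N)} {f : Fin N ↪o Fin (N+2)} (hf : Pat π σ f)
    {p q r : Fin (N+2)} (hq : (q:ℕ) = p + 1) (hr : (r:ℕ) = q + 1) (hp' : ∀ x, f x ≠ p)
    (hq' : ∀ x, f x ≠ q) (hd : fdist (σ p) (σ r) = 1) :
    ∃ g : Fin N ↪o Fin (N+2), Pat π σ g ∧ (∀ x, g x ≠ q) ∧ (∀ x, g x ≠ r) := by
  have hm : StrictMono (fun x => if f x = r then p else f x) := by
    intro x y hxy
    have h := f.strictMono hxy
    have h1 := hp' x
    have h2 := hp' y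
    have h3 := hq' x
    have h4 := hq' y
    simp only [ne_eq, Fin.ext_iff] at h1 h2 h3 h4
    simp only [Fin.lt_def, Fin.ext_iff] at h ⊢
    split_ifs <;> omega
  refine ⟨OrderEmbedding.ofStrictMono _ hm, fun x y => ?_, fun x => ?_, fun x => ?_⟩
  · rw [hf x y]
    simp only [OrderEmbedding.coe_ofStrictMono]
    have h1 : σ (f x) ≠ σ p := fun h => hp' x (σ.injective h)
    have h2 : σ (f y) ≠ σ p := fun h => hp' y (σ.injective h)
    have h3 : f x ≠ r → σ (f x) ≠ σ r := fun h h' => h (σ.injective h')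
    have h4 : f y ≠ r → σ (f y) ≠ σ r := fun h h' => h (σ.injective h')
    unfold fdist at hd
    simp only [ne_eq, Fin.ext_iff (a := σ _)] at h1 h2 h3 h4
    split_ifs with c1 c2 c2
    · rw [c1, c2]; simp
    · have := h4 c2
      rw [c1, Fin.lt_def, Fin.lt_def]; omega
    · have := h3 c1
      rw [c2, Fin.lt_def, Fin.lt_def]; omega
    · rfl
  · simp only [OrderEmbedding.coe_ofStrictMono]
    split_ifs
    · rw [Ne, Fin.ext_iff]; omega
    · exact hq' x
  · simp only [OrderEmbedding.coe_ofStrictMono]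
    split_ifs with h
    · rw [Ne, Fin.ext_iff]; omega
    · exact h

theorem adj_case {N : ℕ} {σ : Equiv.Perm (Fin (N+2))} (hσ : IsKing σ)
    {π : Equiv.Perm (Fin N)} (hπ : IsKing π) : ∀ (d : ℕ) (f : Fin N ↪o Fin (N+2)) (_ : Pat π σ f)
    (p q : Fin (N+2)) (_ : (q:ℕ) = p + 1) (_ : (p:ℕ) + d = N + 2) (_ : ∀ x, f x ≠ p)
    (_ : ∀ x, f x ≠ q), ∃ τ : Equiv.Perm (Fin (N+1)), IsKing τ ∧ Contains π τ ∧ Contains τ σ := by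
  intro d
  induction d with
  | zero => intro f _ p q _ h; have := p.2; omega
  | succ d ih =>
    intro f hf p q hq hpd hp' hq'
    obtain ⟨τ, hτ⟩ := exists_del σ q
    by_cases hk : IsKing τ
    · exact ⟨τ, hk, pat_del hf hq' hτ, del_contains hτ⟩
    · have hqp : q ≠ p := by rw [Ne, Fin.ext_iff]; omega
      obtain ⟨k, hk1, hk2, h | h⟩ := sep_of_not_king_s8 hσ hπ hf hqp hq' hp' hτ hk
      · have hkq : (k:ℕ) = q + 1 := by
          rw [Ne, Fin.ext_iff] at hk1 hk2
          unfold fdist at h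
          omega
        obtain ⟨g, hg, hg1, hg2⟩ := shift_pat hf hq hkq hp' hq' h.2.2
        exact ih g hg q k hkq (by omega) hg1 hg2
      · have := hσ p q hq
        unfold fdist at h this
        omega

theorem adj_case' {N : ℕ} {σ : Equiv.Perm (Fin (N+2))} (hσ : IsKing σ)
    {π : Equiv.Perm (Fin N)} (hπ : IsKing π) (f : Fin N ↪o Fin (N+2)) (hf : Pat π σ f)
    (a b : Fin (N+2)) (hab : fdist a b = 1) (ha : ∀ x, f x ≠ a) (hb : ∀ x, f x ≠ b) :
    ∃ τ : Equiv.Perm (Fin (N+1)), IsKing τ ∧ Contains π τ ∧ Contains τ σ := by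
  unfold fdist at hab
  rcases (show (b:ℕ) = a + 1 ∨ (a:ℕ) = b + 1 by omega) with h | h
  · exact adj_case hσ hπ (N + 2 - a) f hf a b h (by omega) ha hb
  · exact adj_case hσ hπ (N + 2 - b) f hf b a h (by omega) hb ha

theorem king_inv {n : ℕ} {σ : Equiv.Perm (Fin n)} (hσ : IsKing σ) : IsKing σ.symm := by
  intro i j hij h
  have h1 := hσ (σ.symm i) (σ.symm j)
  have h2 := hσ (σ.symm j) (σ.symm i)
  simp only [Equiv.apply_symm_apply] at h1 h2
  unfold fdist at *
  omega

theorem pat_inv {m n : ℕ} {π : Equiv.Perm (Fin m)} {σ : Equiv.Perm (Fin n)} {f : Fin m ↪o Fin n}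
    (hf : Pat π σ f) : ∃ g : Fin m ↪o Fin n, Pat π.symm σ.symm g ∧ ∀ x, g x = σ (f (π.symm x)) := by
  have hm : StrictMono (fun x => σ (f (π.symm x))) := by
    intro x y hxy
    apply (hf _ _).mp
    simpa using hxy
  refine ⟨OrderEmbedding.ofStrictMono _ hm, fun x y => ?_, fun x => rfl⟩
  simp

theorem contains_inv {m n : ℕ} {π : Equiv.Perm (Fin m)} {σ : Equiv.Perm (Fin n)}
    (h : Contains π σ) : Contains π.symm σ.symm := by
  obtain ⟨f, hf⟩ := h
  obtain ⟨g, hg, -⟩ := pat_inv hf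
  exact ⟨g, hg⟩

theorem main_case {N : ℕ} {σ : Equiv.Perm (Fin (N+2))} (hσ : IsKing σ)
    {π : Equiv.Perm (Fin N)} (hπ : IsKing π) (h : Contains π σ) :
    ∃ τ : Equiv.Perm (Fin (N+1)), IsKing τ ∧ Contains π τ ∧ Contains τ σ := by
  obtain ⟨f, hf⟩ := h
  have hc : 1 < ((Finset.univ.map f.toEmbedding)ᶜ).card := by
    rw [Finset.card_compl, Finset.card_map]; simp
  obtain ⟨a, ha, b, hb, hab⟩ := Finset.one_lt_card.mp hc
  simp only [Finset.mem_compl, Finset.mem_map, Finset.mem_univ, true_and, not_exists] at ha hb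
  change ∀ x, f x ≠ a at ha
  change ∀ x, f x ≠ b at hb
  obtain ⟨τ, hτ⟩ := exists_del σ a
  by_cases hk : IsKing τ
  · exact ⟨τ, hk, pat_del hf ha hτ, del_contains hτ⟩
  · obtain ⟨k, -, -, h | h⟩ := sep_of_not_king_s8 hσ hπ hf hab ha hb hτ hk
    · exact adj_case' hσ hπ f hf a b h.1 ha hb
    · obtain ⟨g, hg, hg'⟩ := pat_inv hf
      obtain ⟨t, t1, t2, t3⟩ := adj_case' (king_inv hσ) (king_inv hπ) g hg (σ a) (σ b) h.1
        (fun x hx => ha _ (σ.injective ((hg' x).symm.trans hx)))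
        (fun x hx => hb _ (σ.injective ((hg' x).symm.trans hx)))
      exact ⟨t.symm, king_inv t1, contains_inv t2, contains_inv t3⟩

/-- a king of length `n-2` below a king of length `n > 4` has a king
of length `n-1` strictly in between. -/
theorem grandson_implies_son (n : ℕ) (hn : 4 < n)
    (σ : Equiv.Perm (Fin n)) (hσ : IsKing σ)
    (π : Equiv.Perm (Fin (n - 2))) (hπ : IsKing π) (hπσ : StrictContains π σ) :
    ∃ τ : Equiv.Perm (Fin (n - 1)),
      IsKing τ ∧ StrictContains π τ ∧ StrictContains τ σ := by
  obtain ⟨N, rfl⟩ : ∃ N, n = N + 2 := ⟨n - 2, by omega⟩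
  obtain ⟨τ, h1, h2, h3⟩ := main_case (N := N) hσ hπ hπσ.1
  exact ⟨τ, h1, ⟨h2, by omega⟩, ⟨h3, by omega⟩⟩
end

section
/- For any two king permutations π ≺ σ there exists a chain of king permutations π = π^0 ≺ π^1 ≺ ⋯ ≺ π^k = σ such that for each 1 ≤ i ≤ k, (length of π^i) − (length of π^{i−1}) ∈ {1, 3}. -/
open Equiv

def CK.Vs (B : ℤ → ℤ → Prop) (x : ℤ) : Prop :=
  ∃ z, (B (x-1) z ∧ B (x+1) (z+1)) ∨ (B (x-1) (z+1) ∧ B (x+1) z)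

structure CK.Good (B : ℤ → ℤ → Prop) (N : ℤ) : Prop where
  hx : ∀ x y y', B x y → B x y' → y = y'
  hy : ∀ x x' y, B x y → B x' y → x = x'
  hk : ∀ x y, B x y → ¬ B (x+1) (y+1)
  hk' : ∀ x y, B x y → ¬ B (x+1) (y-1)
  hb : ∀ x y, B x y → -N ≤ x ∧ x ≤ N ∧ -N ≤ y ∧ y ≤ N
  hs : ∀ x y, B x y → CK.Vs B x ∨ CK.Vs (fun a b => B b a) y

def CK.VG (B : ℤ → ℤ → Prop) (d : ℤ) (x : ℤ) : Prop :=
  ∃ y z, B x y ∧ ((B (x-1) z ∧ B (x+1) (z+1)) ∨ (B (x-1) (z+1) ∧ B (x+1) z)) ∧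
    (y = z + 1 + d ∨ y = z - d)

def CK.Blk (B : ℤ → ℤ → Prop) : Prop :=
  ∃ p v, (B p (v+1) ∧ B (p+1) (v+3) ∧ B (p+2) v ∧ B (p+3) (v+2)) ∨
    (B p (v+2) ∧ B (p+1) v ∧ B (p+2) (v+3) ∧ B (p+3) (v+1))

namespace CK

theorem Good.flip {B N} (h : Good B N) : Good (fun a b => B b a) N where
  hx x y y' a b := h.hy _ _ _ a b
  hy x x' y a b := h.hx _ _ _ a b
  hk x y a b := h.hk _ _ a b
  hk' x y a b := by
    refine h.hk' _ _ b ?_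
    simpa using a
  hb x y a := by have := h.hb _ _ a; tauto
  hs x y a := (h.hs _ _ a).symm

theorem Vs_neg {B : ℤ → ℤ → Prop} {x} (h : Vs B x) : Vs (fun a b => B a (-b)) x := by
  obtain ⟨z, h⟩ := h
  refine ⟨-z-1, ?_⟩
  have e1 : -(-z-1) = z+1 := by ring
  have e2 : -(-z-1+1) = z := by ring
  simp only [e1, e2]; tauto

theorem Vs_neg' {B : ℤ → ℤ → Prop} {x} (h : Vs B x) : Vs (fun a b => B (-a) b) (-x) := by
  obtain ⟨z, h⟩ := h
  refine ⟨z, ?_⟩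
  have e1 : -(-x-1) = x+1 := by ring
  have e2 : -(-x+1) = x-1 := by ring
  simp only [e1, e2]; tauto

theorem Good.neg {B N} (h : Good B N) : Good (fun a b => B a (-b)) N where
  hx x y y' a b := by have := h.hx _ _ _ a b; omega
  hy x x' y a b := h.hy _ _ _ a b
  hk x y a b := h.hk' _ _ a (by have e : -(y+1) = -y-1 := by ring
                                rw [← e]; exact b)
  hk' x y a b := h.hk _ _ a (by have e : -(y-1) = -y+1 := by ring
                                rw [← e]; exact b)
  hb x y a := by have := h.hb _ _ a; omega
  hs x y a := by
    rcases h.hs _ _ a with h | h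
    · exact Or.inl (Vs_neg h)
    · right; simpa using Vs_neg' h

theorem Good.neg' {B N} (h : Good B N) : Good (fun a b => B (-a) b) N :=
  h.flip.neg.flip

theorem VG_neg {B : ℤ → ℤ → Prop} {d x} (h : VG B d x) : VG (fun a b => B a (-b)) d x := by
  obtain ⟨y, z, h0, h, h'⟩ := h
  refine ⟨-y, -z-1, ?_⟩
  have e1 : -(-z-1) = z+1 := by ring
  have e2 : -(-z-1+1) = z := by ring
  simp only [e1, e2, neg_neg]
  refine ⟨h0, by tauto, by omega⟩

theorem VG_neg' {B : ℤ → ℤ → Prop} {d x} (h : VG B d x) : VG (fun a b => B (-a) b) d (-x) := by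
  obtain ⟨y, z, h0, h, h'⟩ := h
  refine ⟨y, z, ?_⟩
  have e1 : -(-x-1) = x+1 := by ring
  have e2 : -(-x+1) = x-1 := by ring
  simp only [e1, e2, neg_neg]
  refine ⟨h0, by tauto, by omega⟩

theorem VG_neg_iff {B : ℤ → ℤ → Prop} {d x} : VG (fun a b => B a (-b)) d x ↔ VG B d x :=
  ⟨fun h => by simpa using VG_neg h, VG_neg⟩

theorem VG_neg'_iff {B : ℤ → ℤ → Prop} {d x} : VG (fun a b => B (-a) b) d x ↔ VG B d (-x) :=
  ⟨fun h => by simpa using VG_neg' h, fun h => by simpa using VG_neg' h⟩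

/-- case analysis on which values sit around -/
theorem core {B N} (h : Good B N) {d : ℤ} (hd : 3 ≤ d)
    (hV : ∀ e x, e < d → 0 ≤ e → ¬ VG B e x) (hH : ∀ e x, e < d → 0 ≤ e → ¬ VG (fun a b => B b a) e x)
    {x v} (h1 : B (x-1) (v+1)) (h2 : B x (v+1+d)) (h3 : B (x+1) v) :
    B (x-2) (v+2+d) ∧ B (x+2) (v+d) := by
  have near : B (x-2) (v+2+d) := by
    rcases h.hs _ _ h1 with ⟨z, hz⟩ | ⟨z, hz⟩
    · have e1 : x - 1 - 1 = x - 2 := by ring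
      have e2 : x - 1 + 1 = x := by ring
      rw [e1, e2] at hz
      rcases hz with ⟨ha, hb⟩ | ⟨ha, hb⟩
      · have := h.hx _ _ _ hb h2
        exact absurd ⟨v+1, z, h1, by rw [e1, e2]; exact Or.inl ⟨ha, hb⟩, by right; omega⟩
          (hV (d-1) (x-1) (by omega) (by omega))
      · have := h.hx _ _ _ hb h2
        subst this
        convert ha using 1; ring
    · have e1 : v + 1 - 1 = v := by ring
      have e2 : v + 1 + 1 = v + 2 := by ring
      exfalso
      refine hH 2 (v+1) (by omega) (by omega) ⟨x-1, z, h1, hz, ?_⟩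
      simp only [e1, e2] at hz
      rcases hz with ⟨ha, hb⟩ | ⟨ha, hb⟩
      · have := h.hy _ _ _ ha h3
        right; omega
      · have := h.hy _ _ _ ha h3
        have : z = x := by omega
        subst this
        have := h.hx _ _ _ hb h2
        omega
  refine ⟨near, ?_⟩
  rcases h.hs _ _ h3 with ⟨z, hz⟩ | ⟨z, hz⟩
  · have e1 : x + 1 - 1 = x := by ring
    have e2 : x + 1 + 1 = x + 2 := by ring
    rw [e1, e2] at hz
    rcases hz with ⟨ha, hb⟩ | ⟨ha, hb⟩
    · have := h.hx _ _ _ ha h2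
      subst this
      have e : v + 1 + d + 1 = v + 2 + d := by ring
      rw [e] at hb
      have := h.hy _ _ _ hb near
      omega
    · have := h.hx _ _ _ ha h2
      convert hb using 1; omega
  · exfalso
    simp only at hz
    rcases hz with ⟨ha, hb⟩ | ⟨ha, hb⟩
    · have := h.hy _ _ _ hb h1
      have : z = x - 2 := by omega
      subst this
      have := h.hx _ _ _ ha near
      omega
    · have := h.hy _ _ _ hb h1
      subst this
      have e2 : x - 1 + 1 = x := by ring
      rw [e2] at ha
      have := h.hx _ _ _ ha h2
      omega

theorem core2 {B N} (h : Good B N) {d : ℤ} (hd : 3 ≤ d)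
    (hV : ∀ e x, e < d → 0 ≤ e → ¬ VG B e x) (hH : ∀ e x, e < d → 0 ≤ e → ¬ VG (fun a b => B b a) e x)
    {x v} (h1 : B (x-1) (v+1)) (h2 : B x (v+1+d)) (h3 : B (x+1) v) :
    VG B d (x-1) ∧ VG B d (x+1) := by
  obtain ⟨a, b⟩ := core h hd hV hH h1 h2 h3
  refine ⟨⟨v+1, v+1+d, h1, Or.inr ⟨?_, ?_⟩, by right; ring⟩, ⟨v, v+d, h3, Or.inr ⟨?_, ?_⟩, by right; ring⟩⟩
  · convert a using 1 <;> ring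
  · convert h2 using 1; ring
  · convert h2 using 1 <;> ring
  · convert b using 1; ring

theorem core3 {B N} (h : Good B N) {d : ℤ} (hd : 3 ≤ d)
    (hV : ∀ e x, e < d → 0 ≤ e → ¬ VG B e x) (hH : ∀ e x, e < d → 0 ≤ e → ¬ VG (fun a b => B b a) e x)
    {x v} (h2 : B x (v+1+d))
    (h3 : (B (x-1) v ∧ B (x+1) (v+1)) ∨ (B (x-1) (v+1) ∧ B (x+1) v)) :
    VG B d (x-1) ∧ VG B d (x+1) := by
  rcases h3 with ⟨h1, h3⟩ | ⟨h1, h3⟩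
  · have e1 : -(-x-1) = x+1 := by ring
    have e2 : -(-x+1) = x-1 := by ring
    have := core2 (x := -x) (v := v) h.neg' hd (fun e x he h0 hh => hV e (-x) he h0 (VG_neg'_iff.1 hh))
      (fun e x he h0 hh => hH e x he h0 ((VG_neg_iff (B := fun a b => B b a)).1 hh)) (by rw [e1]; exact h3) (by rw [neg_neg]; exact h2)
      (by rw [e2]; exact h1)
    rw [VG_neg'_iff, VG_neg'_iff, e1, e2] at this
    exact this.symm
  · exact core2 h hd hV hH h1 h2 h3

theorem core4 {B N} (h : Good B N) {d : ℤ} (hd : 3 ≤ d)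
    (hV : ∀ e x, e < d → 0 ≤ e → ¬ VG B e x) (hH : ∀ e x, e < d → 0 ≤ e → ¬ VG (fun a b => B b a) e x)
    {x} (h2 : VG B d x) :
    VG B d (x-1) := by
  obtain ⟨y, z, h0, h1, rfl | rfl⟩ := h2
  · exact (core3 h hd hV hH h0 h1).1
  · have e1 : -(-z-1) = z+1 := by ring
    have e2 : -(-z-1+1) = z := by ring
    have e3 : -(-z-1+1+d) = z-d := by ring
    have := core3 (x := x) (v := -z-1) h.neg hd (fun e x he h0 hh => hV e x he h0 (VG_neg_iff.1 hh))
      (fun e x he h0 hh => hH e (-x) he h0 ((VG_neg'_iff (B := fun a b => B b a)).1 hh)) (by rw [e3]; exact h0)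
      (by simp only [e1, e2]; tauto)
    rw [VG_neg_iff] at this
    exact this.1

theorem two {B N} (h : Good B N)
    {x v} (h1 : B (x-1) (v+1)) (h2 : B x (v+3)) (h3 : B (x+1) v) :
    B (x+2) (v+2) := by
  by_contra hc
  have near : B (x-2) (v+4) := by
    rcases h.hs _ _ h1 with ⟨z, hz⟩ | ⟨z, hz⟩
    · have e1 : x - 1 - 1 = x - 2 := by ring
      have e2 : x - 1 + 1 = x := by ring
      rw [e1, e2] at hz
      rcases hz with ⟨ha, hb⟩ | ⟨ha, hb⟩
      · have := h.hx _ _ _ hb h2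
        exfalso
        refine h.hk' _ _ ha ?_
        convert h1 using 1 <;> omega
      · have := h.hx _ _ _ hb h2
        subst this
        convert ha using 1; ring
    · have e1 : v + 1 - 1 = v := by ring
      have e2 : v + 1 + 1 = v + 2 := by ring
      exfalso
      simp only [e1, e2] at hz
      rcases hz with ⟨ha, hb⟩ | ⟨ha, hb⟩
      · have := h.hy _ _ _ ha h3
        apply hc
        convert hb using 1; omega
      · have := h.hy _ _ _ ha h3
        have : z = x := by omega
        subst this
        have := h.hx _ _ _ hb h2
        omega
  rcases h.hs _ _ h3 with ⟨z, hz⟩ | ⟨z, hz⟩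
  · have e1 : x + 1 - 1 = x := by ring
    have e2 : x + 1 + 1 = x + 2 := by ring
    rw [e1, e2] at hz
    rcases hz with ⟨ha, hb⟩ | ⟨ha, hb⟩
    · have := h.hx _ _ _ ha h2
      subst this
      have := h.hy _ _ _ (show B (x+2) (v+4) by convert hb using 1; ring) near
      omega
    · have := h.hx _ _ _ ha h2
      apply hc
      convert hb using 1; omega
  · simp only at hz
    rcases hz with ⟨ha, hb⟩ | ⟨ha, hb⟩
    · have := h.hy _ _ _ hb h1
      have : z = x - 2 := by omega
      subst this
      have := h.hx _ _ _ ha near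
      omega
    · have := h.hy _ _ _ hb h1
      subst this
      have e2 : x - 1 + 1 = x := by ring
      rw [e2] at ha
      have := h.hx _ _ _ ha h2
      omega

theorem Blk.flip {B : ℤ → ℤ → Prop} (h : Blk (fun a b => B b a)) : Blk B := by
  obtain ⟨p, v, h | h⟩ := h
  · exact ⟨v, p, Or.inr ⟨h.2.2.1, h.1, h.2.2.2, h.2.1⟩⟩
  · exact ⟨v, p, Or.inl ⟨h.2.1, h.2.2.2, h.1, h.2.2.1⟩⟩

theorem Blk.neg {B : ℤ → ℤ → Prop} (h : Blk (fun a b => B a (-b))) : Blk B := by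
  obtain ⟨p, v, h | h⟩ := h
  · refine ⟨p, -v-3, Or.inr ⟨?_, ?_, ?_, ?_⟩⟩
    · convert h.1 using 1; ring
    · convert h.2.1 using 1; ring
    · convert h.2.2.1 using 1; ring
    · convert h.2.2.2 using 1; ring
  · refine ⟨p, -v-3, Or.inl ⟨?_, ?_, ?_, ?_⟩⟩
    · convert h.1 using 1; ring
    · convert h.2.1 using 1; ring
    · convert h.2.2.1 using 1; ring
    · convert h.2.2.2 using 1; ring

theorem Blk.neg' {B : ℤ → ℤ → Prop} (h : Blk (fun a b => B (-a) b)) : Blk B :=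
  (Blk.neg (B := fun a b => B b a) (Blk.flip h)).flip

theorem two2 {B N} (h : Good B N)
    {x v} (h2 : B x (v+1+2))
    (h3 : (B (x-1) v ∧ B (x+1) (v+1)) ∨ (B (x-1) (v+1) ∧ B (x+1) v)) : Blk B := by
  have key : ∀ {B N} (h : Good B N) {x v} (h1 : B (x-1) (v+1)) (h2 : B x (v+1+2)) (h3 : B (x+1) v), Blk B := by
    intro B N h x v h1 h2 h3
    have e : v+1+2 = v+3 := by ring
    rw [e] at h2
    have := two h h1 h2 h3
    refine ⟨x-1, v, Or.inl ⟨h1, ?_, ?_, ?_⟩⟩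
    · convert h2 using 1; ring
    · convert h3 using 1; ring
    · convert this using 1; ring
  rcases h3 with ⟨h1, h3⟩ | ⟨h1, h3⟩
  · have e1 : -(-x-1) = x+1 := by ring
    have e2 : -(-x+1) = x-1 := by ring
    exact Blk.neg' (key (x := -x) (v := v) h.neg' (by rw [e1]; exact h3) (by rw [neg_neg]; exact h2)
      (by rw [e2]; exact h1))
  · exact key h h1 h2 h3

theorem two3 {B N} (h : Good B N) {x} (h2 : VG B 2 x) : Blk B := by
  obtain ⟨y, z, h0, h1, rfl | rfl⟩ := h2
  · exact two2 h h0 h1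
  · have e1 : -(-z-1) = z+1 := by ring
    have e2 : -(-z-1+1) = z := by ring
    have e3 : -(-z-1+1+2) = z-2 := by ring
    exact Blk.neg (two2 (x := x) (v := -z-1) h.neg (by rw [e3]; exact h0)
      (by simp only [e1, e2]; tauto))

theorem VG_ge {B N} (h : Good B N) {d x} (h2 : VG B d x) (hd : 0 ≤ d) : 2 ≤ d := by
  obtain ⟨y, z, h0, h1, h2⟩ := h2
  by_contra hc
  have hd' : d = 0 ∨ d = 1 := by omega
  have a1 := h.hk x y h0
  have a2 := h.hk' x y h0
  have a3 := h.hk (x-1)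
  have a4 := h.hk' (x-1)
  have a5 := h.hy (x-1) x
  have a6 := h.hy (x+1) x
  have e : x - 1 + 1 = x := by ring
  simp only [e] at a3 a4
  have e : z + 1 - 1 = z := by ring
  have a7 := a3 z
  have a7 := a4 z
  have a7 := a3 (z+1)
  have a7 := a4 (z+1)
  have a7 := a5 z
  have a7 := a5 (z+1)
  have a7 := a6 z
  have a7 := a6 (z+1)
  rcases hd' with rfl | rfl <;> rcases h2 with rfl | rfl <;> grind

theorem main_aux (k : ℕ) : ∀ {B N} (_ : Good B N) (x : ℤ), VG B k x → Blk B := by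
  induction k using Nat.strong_induction_on with
  | _ k ih =>
  intro B N h x hx
  have hk := VG_ge h hx (by omega)
  by_contra hB
  have hV : ∀ e x, e < (k:ℤ) → 0 ≤ e → ¬ VG B e x := by
    intro e x he h0 hh
    lift e to ℕ using h0
    exact hB (ih e (by omega) h x hh)
  have hH : ∀ e x, e < (k:ℤ) → 0 ≤ e → ¬ VG (fun a b => B b a) e x := by
    intro e x he h0 hh
    lift e to ℕ using h0
    exact hB (ih e (by omega) h.flip x hh).flip
  rcases eq_or_lt_of_le hk with hk | hk
  · rw [← hk] at hx
    exact hB (two3 h hx)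
  · have key : ∀ j : ℕ, VG B k (x - j) := by
      intro j
      induction j with
      | zero => simpa using hx
      | succ j ihj =>
        have := core4 h (by omega) hV hH ihj
        convert this using 1; push_cast; ring
    obtain ⟨y, z, h0, -⟩ := hx
    have b1 := h.hb _ _ h0
    obtain ⟨y, z, h1, -⟩ := key (2*N+1).toNat
    have b2 := h.hb _ _ h1
    omega

theorem main {B N} (h : Good B N) {x y} (h0 : B x y) : Blk B := by
  have key : ∀ {B N} (_ : Good B N) {x y}, B x y → Vs B x → Blk B := by
    intro B N h x y h0 ⟨z, hz⟩
    have a5 := h.hy (x-1) x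
    have a6 := h.hy (x+1) x
    by_cases hyz : z + 1 ≤ y
    · exact main_aux (y - z - 1).toNat h x ⟨y, z, h0, hz, by omega⟩
    · exact main_aux (z - y).toNat h x ⟨y, z, h0, hz, by omega⟩
  rcases h.hs _ _ h0 with hh | hh
  · exact key h h0 hh
  · exact (key h.flip h0 hh).flip

end CK

namespace CK

def Emb {m n : ℕ} (π : Equiv.Perm (Fin m)) (σ : Equiv.Perm (Fin n)) (f : Fin m → Fin n) : Prop :=
  (∀ a b, a < b ↔ f a < f b) ∧ (∀ a b, π a < π b ↔ σ (f a) < σ (f b))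

def Btw {n : ℕ} (x y z : Fin n) : Prop := (x < z ∧ z < y) ∨ (y < z ∧ z < x)

theorem Btw.symm {n : ℕ} {x y z : Fin n} (h : Btw x y z) : Btw y x z := Or.symm h

theorem contains_iff {m n : ℕ} (π : Equiv.Perm (Fin m)) (σ : Equiv.Perm (Fin n)) :
    Contains π σ ↔ ∃ f, Emb π σ f := by
  constructor
  · rintro ⟨f, hf⟩
    exact ⟨f, fun a b => f.lt_iff_lt.symm, hf⟩
  · rintro ⟨f, h1, h2⟩
    exact ⟨OrderEmbedding.ofStrictMono f (fun a b h => (h1 a b).1 h), h2⟩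

theorem kingE {m n : ℕ} {π : Equiv.Perm (Fin m)} {σ : Equiv.Perm (Fin n)} {f : Fin m → Fin n}
    (hπ : IsKing π) (hf : Emb π σ f) {a b : Fin m} (hab : a ≠ b) :
    ∃ c, Btw (f a) (f b) (f c) ∨ Btw (σ (f a)) (σ (f b)) (σ (f c)) := by
  wlog h : a < b generalizing a b
  · obtain ⟨c, hc⟩ := this hab.symm (by omega)
    exact ⟨c, hc.imp Btw.symm Btw.symm⟩
  unfold Btw
  simp only [← hf.1, ← hf.2]
  by_cases hb : (b : ℕ) = a + 1
  · have h1 := hπ a b hb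
    have h2 : π a ≠ π b := fun hh => hab (π.injective hh)
    unfold fdist at h1
    have h3 : (π a : ℕ) ≠ π b := fun hh => h2 (Fin.ext hh)
    rcases lt_or_gt_of_ne h3 with h4 | h4
    · refine ⟨π.symm ⟨π a + 1, by omega⟩, ?_⟩
      simp only [Equiv.apply_symm_apply, Fin.lt_def]
      omega
    · refine ⟨π.symm ⟨π b + 1, by omega⟩, ?_⟩
      simp only [Equiv.apply_symm_apply, Fin.lt_def]
      omega
  · refine ⟨⟨a + 1, by omega⟩, ?_⟩
    simp only [Fin.lt_def] at *
    omega

theorem pat {m n : ℕ} {π : Equiv.Perm (Fin m)} {σ : Equiv.Perm (Fin n)} (T : Finset (Fin n))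
    (hT : ∀ i ∈ T, ∀ j ∈ T, i < j → ∃ k ∈ T, Btw i j k ∨ Btw (σ i) (σ j) (σ k)) (l : ℕ)
    (hl : T.card = l) :
    ∃ τ : Equiv.Perm (Fin l), IsKing τ ∧ Contains τ σ ∧
      ∀ f, Emb π σ f → (∀ a, f a ∈ T) → Contains π τ := by
  let e := T.orderIsoOfFin hl
  have hl' : (T.map σ.toEmbedding).card = l := by simpa using hl
  let e' := (T.map σ.toEmbedding).orderIsoOfFin hl'
  let t : Fin l → Fin l := fun a => e'.symm ⟨σ (e a), by simp⟩
  have ht : ∀ a b, t a < t b ↔ σ (e a) < σ (e b) := by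
    intro a b
    simp only [t, OrderIso.lt_iff_lt, Subtype.mk_lt_mk]
  have he : ∀ a b, a < b ↔ (e a : Fin n) < e b := by
    intro a b
    rw [Subtype.coe_lt_coe, OrderIso.lt_iff_lt]
  have hinj : Function.Injective t := by
    intro a b hab
    have h1 := ht a b
    have h2 := ht b a
    rw [hab] at h1 h2
    have h3 : σ (e a) = σ (e b) := by
      have := lt_irrefl (t b)
      apply le_antisymm <;> apply le_of_not_gt <;> tauto
    exact e.injective (Subtype.ext (σ.injective h3))
  let τ : Equiv.Perm (Fin l) := Equiv.ofBijective t (Finite.injective_iff_bijective.1 hinj)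
  have hτ : ∀ a, τ a = t a := fun a => rfl
  refine ⟨τ, ?_, (contains_iff _ _).2 ⟨fun a => e a, he, ht⟩, ?_⟩
  · intro i j hij hd
    have hij' : i < j := by rw [Fin.lt_def]; omega
    obtain ⟨k, hk, hk'⟩ := hT (e i) (e i).2 (e j) (e j).2 ((he _ _).1 hij')
    obtain ⟨c, hc⟩ := e.surjective ⟨k, hk⟩
    have hc' : k = e c := by rw [hc]
    subst hc'
    unfold Btw at hk'
    simp only [← ht, ← he, ← hτ] at hk'
    unfold fdist at hd
    simp only [Fin.lt_def] at hk'
    omega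
  · intro f hf hfT
    refine (contains_iff _ _).2 ⟨fun a => e.symm ⟨f a, hfT a⟩, ?_, ?_⟩
    · intro a b
      rw [he]; simp [hf.1]
    · intro a b
      rw [hτ, hτ, ht]; simp [hf.2]

theorem swap {m n : ℕ} {π : Equiv.Perm (Fin m)} {σ : Equiv.Perm (Fin n)} {f : Fin m → Fin n}
    (hf : Emb π σ f) {a : Fin m} {w : Fin n} (hw : ∀ b, f b ≠ w)
    (h : ∀ b, ¬ Btw (f a) w (f b) ∧ ¬ Btw (σ (f a)) (σ w) (σ (f b))) :
    Emb π σ (Function.update f a w) := by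
  have inj : ∀ b, b ≠ a → f b ≠ f a := by
    intro b hb he
    have h1 := hf.1 a b
    have h2 := hf.1 b a
    rw [he] at h1 h2
    have := lt_irrefl (f a)
    have h3 : ¬ a < b := by tauto
    have h4 : ¬ b < a := by tauto
    omega
  have key : ∀ b, b ≠ a → ((f b < f a ↔ f b < w) ∧ (f a < f b ↔ w < f b) ∧
      (σ (f b) < σ (f a) ↔ σ (f b) < σ w) ∧ (σ (f a) < σ (f b) ↔ σ w < σ (f b))) := by
    intro b hb
    have h1 := inj b hb
    have h2 := hw b
    have h3 : σ (f b) ≠ σ (f a) := fun hh => h1 (σ.injective hh)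
    have h4 : σ (f b) ≠ σ w := fun hh => h2 (σ.injective hh)
    have := h b
    unfold Btw at this
    omega
  constructor
  · intro x y
    by_cases hx : x = a <;> by_cases hy : y = a
    · subst hx; subst hy; simp
    · subst hx
      rw [Function.update_self, Function.update_of_ne hy, hf.1]
      exact (key y hy).2.1
    · subst hy
      rw [Function.update_self, Function.update_of_ne hx, hf.1]
      exact (key x hx).1
    · rw [Function.update_of_ne hx, Function.update_of_ne hy, hf.1]
  · intro x y
    by_cases hx : x = a <;> by_cases hy : y = a
    · subst hx; subst hy; simp
    · subst hx
      rw [Function.update_self, Function.update_of_ne hy, hf.2]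
      exact (key y hy).2.2.2
    · subst hy
      rw [Function.update_self, Function.update_of_ne hx, hf.2]
      exact (key x hx).2.2.1
    · rw [Function.update_of_ne hx, Function.update_of_ne hy, hf.2]

end CK

namespace CK

theorem Emb.inj {m n : ℕ} {π : Equiv.Perm (Fin m)} {σ : Equiv.Perm (Fin n)} {f : Fin m → Fin n}
    (hf : Emb π σ f) {a b : Fin m} (h : f a = f b) : a = b := by
  rcases lt_trichotomy a b with h1 | h1 | h1
  · have := (hf.1 _ _).1 h1
    rw [h] at this
    exact absurd this (lt_irrefl _)
  · exact h1
  · have := (hf.1 _ _).1 h1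
    rw [h] at this
    exact absurd this (lt_irrefl _)

theorem kingNat {n : ℕ} {σ : Equiv.Perm (Fin n)} (hσ : IsKing σ) (i j : Fin n)
    (h : (j : ℕ) = i + 1) : (σ j : ℕ) ≠ σ i + 1 ∧ (σ i : ℕ) ≠ σ j + 1 := by
  have := hσ i j h
  unfold fdist at this
  omega

theorem adj {n : ℕ} {x y i : Fin n} (h : x < y) (hc : ∀ c, c ≠ i → ¬ Btw x y c) :
    (y : ℕ) = x + 1 ∨ ((i : ℕ) = x + 1 ∧ (y : ℕ) = x + 2) := by
  by_contra hcon
  have hy := y.2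
  rw [Fin.lt_def] at h
  have h1 : (⟨x + 1, by omega⟩ : Fin n) = i := by
    by_contra hh
    apply hc _ hh
    unfold Btw; simp only [Fin.lt_def]; omega
  have h1' : (x : ℕ) + 1 = i := by rw [← h1]
  have h2 : (⟨x + 2, by omega⟩ : Fin n) = i := by
    by_contra hh
    apply hc _ hh
    unfold Btw; simp only [Fin.lt_def]; omega
  have h2' : (x : ℕ) + 2 = i := by rw [← h2]
  omega

def Bm {m n : ℕ} (π : Equiv.Perm (Fin m)) (σ : Equiv.Perm (Fin n)) (i : Fin n) : Prop :=
  ∃ f, Emb π σ f ∧ ∀ a, f a ≠ i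

def SepN {n : ℕ} (σ : Equiv.Perm (Fin n)) (i j k : Fin n) : Prop :=
  ((j : ℕ) + 1 = i ∧ (i : ℕ) + 1 = k ∧ ((σ k : ℕ) = σ j + 1 ∨ (σ j : ℕ) = σ k + 1)) ∨
  (((σ j : ℕ) + 1 = σ i ∧ (σ i : ℕ) + 1 = σ k ∧ ((k : ℕ) = j + 1 ∨ (j : ℕ) = k + 1)))

theorem sepN {n : ℕ} {σ : Equiv.Perm (Fin n)} (hσ : IsKing σ) {i j k : Fin n} (hjk : j < k)
    (h : ∀ c, c ≠ i → ¬ Btw j k c ∧ ¬ Btw (σ j) (σ k) (σ c)) :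
    SepN σ i j k ∨ SepN σ i k j := by
  have h1 := adj hjk (fun c hc => (h c hc).1)
  have hv : ∀ c, c ≠ σ i → ¬ Btw (σ j) (σ k) c := by
    intro c hc
    have := (h (σ.symm c) (fun hh => hc (by rw [← hh]; simp))).2
    simpa using this
  have hne : σ j ≠ σ k := fun hh => hjk.ne (σ.injective hh)
  have k1 := kingNat hσ j k
  have k2 := kingNat hσ j i
  unfold SepN
  rcases lt_or_gt_of_ne hne with h2 | h2
  · have h3 := adj h2 hv
    clear hv h
    rcases h1 with h1 | h1 <;> rcases h3 with h3 | h3 <;> omega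
  · have h3 := adj h2 (fun c hc hh => hv c hc hh.symm)
    clear hv h
    rcases h1 with h1 | h1 <;> rcases h3 with h3 | h3 <;> omega

theorem sep2 {m n : ℕ} {π : Equiv.Perm (Fin m)} {σ : Equiv.Perm (Fin n)}
    (hπ : IsKing π) (hσ : IsKing σ) 
    (hno : ¬ ∃ l, ∃ τ : Equiv.Perm (Fin l), (n = l + 1 ∨ n = l + 3) ∧ IsKing τ ∧
      Contains π τ ∧ Contains τ σ) {i : Fin n} (hi : Bm π σ i) :
    ∃ j k, Bm π σ j ∧ Bm π σ k ∧ SepN σ i j k := by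
  obtain ⟨f, hf, hfi⟩ := hi
  have h0 : ∃ j k, j < k ∧ ∀ c, c ≠ i → ¬ Btw j k c ∧ ¬ Btw (σ j) (σ k) (σ c) := by
    by_contra hcon
    push Not at hcon
    have hn : 0 < n := i.pos
    obtain ⟨τ, h1, h2, h3⟩ := pat (π := π) (σ := σ) (Finset.univ.erase i) (by
      intro j _ k _ hjk
      obtain ⟨c, hc, hc'⟩ := hcon j k hjk
      refine ⟨c, by simp [hc], ?_⟩
      tauto) (n-1) (by simp)
    exact hno ⟨n-1, τ, by omega, h1, h3 f hf (by simp [hfi]), h2⟩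
  obtain ⟨j, k, hjk, hc⟩ := h0
  have hij : i ≠ j → i ≠ k → Bm π σ j ∧ Bm π σ k := by
    intro hij hik
    have hall : ∀ b, ¬ Btw j k (f b) ∧ ¬ Btw (σ j) (σ k) (σ (f b)) := fun b => hc _ (hfi b)
    have hall' : ∀ b, ¬ Btw k j (f b) ∧ ¬ Btw (σ k) (σ j) (σ (f b)) := fun b =>
      ⟨fun h => (hall b).1 h.symm, fun h => (hall b).2 h.symm⟩
    by_cases hj : ∃ a, f a = j <;> by_cases hk : ∃ b, f b = k
    · obtain ⟨a, rfl⟩ := hj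
      obtain ⟨b, rfl⟩ := hk
      obtain ⟨c, hc'⟩ := kingE hπ hf (a := a) (b := b) (fun h => by subst h; exact lt_irrefl _ hjk)
      have := hall c
      tauto
    · obtain ⟨a, rfl⟩ := hj
      push Not at hk
      refine ⟨⟨_, swap hf hk hall, ?_⟩, ⟨f, hf, hk⟩⟩
      intro b
      by_cases hb : b = a
      · subst hb; rw [Function.update_self]; exact hjk.ne'
      · rw [Function.update_of_ne hb]
        exact fun hh => hb (hf.inj hh)
    · obtain ⟨a, rfl⟩ := hk
      push Not at hj
      refine ⟨⟨f, hf, hj⟩, ⟨_, swap hf hj hall', ?_⟩⟩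
      intro b
      by_cases hb : b = a
      · subst hb; rw [Function.update_self]; exact hjk.ne
      · rw [Function.update_of_ne hb]
        exact fun hh => hb (hf.inj hh)
    · push Not at hj hk
      exact ⟨⟨f, hf, hj⟩, ⟨f, hf, hk⟩⟩
  rcases sepN hσ hjk hc with h | h
  · obtain ⟨a, b⟩ := hij (fun hh => by subst hh; unfold SepN at h; omega)
      (fun hh => by subst hh; unfold SepN at h; omega)
    exact ⟨j, k, a, b, h⟩
  · obtain ⟨a, b⟩ := hij (fun hh => by subst hh; unfold SepN at h; omega)
      (fun hh => by subst hh; unfold SepN at h; omega)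
    exact ⟨k, j, b, a, h⟩

theorem blk {m n : ℕ} {π : Equiv.Perm (Fin m)} {σ : Equiv.Perm (Fin n)}
    (hσ : IsKing σ) (hs : ∀ i, Bm π σ i → ∃ j k, Bm π σ j ∧ Bm π σ k ∧ SepN σ i j k)
    {i : Fin n} (hi : Bm π σ i) :
    Blk (fun x y => ∃ i, Bm π σ i ∧ ((i : ℕ) : ℤ) = x ∧ ((σ i : ℕ) : ℤ) = y) := by
  refine main (N := n) ?_ ⟨i, hi, rfl, rfl⟩
  constructor
  · rintro x y y' ⟨i, _, rfl, rfl⟩ ⟨j, _, h, rfl⟩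
    have : i = j := Fin.ext (by omega)
    rw [this]
  · rintro x x' y ⟨i, _, rfl, rfl⟩ ⟨j, _, rfl, h⟩
    have : i = j := σ.injective (Fin.ext (by omega))
    rw [this]
  · rintro x y ⟨i, _, rfl, rfl⟩ ⟨j, _, h, h'⟩
    have := hσ i j (by omega)
    unfold fdist at this
    omega
  · rintro x y ⟨i, _, rfl, rfl⟩ ⟨j, _, h, h'⟩
    have := hσ i j (by omega)
    unfold fdist at this
    omega
  · rintro x y ⟨i, _, rfl, rfl⟩
    omega
  · rintro x y ⟨i, hi, rfl, rfl⟩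
    obtain ⟨j, k, hj, hk, h | h⟩ := hs i hi
    · left
      obtain ⟨h1, h2, h3 | h3⟩ := h
      · exact ⟨(σ j : ℕ), Or.inl ⟨⟨j, hj, by omega, rfl⟩, ⟨k, hk, by omega, by omega⟩⟩⟩
      · exact ⟨(σ k : ℕ), Or.inr ⟨⟨j, hj, by omega, by omega⟩, ⟨k, hk, by omega, by omega⟩⟩⟩
    · right
      obtain ⟨h1, h2, h3 | h3⟩ := h
      · exact ⟨(j : ℕ), Or.inl ⟨⟨j, hj, by omega, by omega⟩, ⟨k, hk, by omega, by omega⟩⟩⟩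
      · exact ⟨(k : ℕ), Or.inr ⟨⟨j, hj, by omega, by omega⟩, ⟨k, hk, by omega, by omega⟩⟩⟩

theorem nonsep {n : ℕ} {σ : Equiv.Perm (Fin n)} {p v : ℕ} {e0 e1 e2 e3 x j k : Fin n}
    (hF : ∀ e x : Fin n, (x : ℕ) = e ↔ (σ x : ℕ) = σ e)
    (p0 : (e0 : ℕ) = p) (p1 : (e1 : ℕ) = p + 1) (p2 : (e2 : ℕ) = p + 2) (p3 : (e3 : ℕ) = p + 3)
    (hv : ((σ e0 : ℕ) = v + 1 ∧ (σ e1 : ℕ) = v + 3 ∧ (σ e2 : ℕ) = v ∧ (σ e3 : ℕ) = v + 2) ∨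
      ((σ e0 : ℕ) = v + 2 ∧ (σ e1 : ℕ) = v ∧ (σ e2 : ℕ) = v + 3 ∧ (σ e3 : ℕ) = v + 1))
    (hQ : ∀ x : Fin n, (p ≤ x ∧ (x : ℕ) ≤ p + 3) ↔ (v ≤ σ x ∧ (σ x : ℕ) ≤ v + 3))
    (hpos : (x : ℕ) + 1 = p ∨ (x : ℕ) = p + 4) (hval : (σ x : ℕ) + 1 = v ∨ (σ x : ℕ) = v + 4)
    (hsep : SepN σ x j k) : False := by
  have a0 := hF e0 j
  have a1 := hF e1 j
  have a2 := hF e2 j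
  have a3 := hF e3 j
  have b0 := hF e0 k
  have b1 := hF e1 k
  have b2 := hF e2 k
  have b3 := hF e3 k
  have qj := hQ j
  have qk := hQ k
  clear hF hQ
  rw [p0] at a0 b0
  rw [p1] at a1 b1
  rw [p2] at a2 b2
  rw [p3] at a3 b3
  rcases hsep with ⟨s1, s2, s3⟩ | ⟨s1, s2, s3⟩
  · clear a1 a2 b1 b2 
    rcases hpos with hpos | hpos
    · have hk : (k : ℕ) = p := by omega
      have hk' := b0.1 hk
      clear a0 a3 b0 b3
      have : ¬ (v ≤ (σ j : ℕ) ∧ (σ j : ℕ) ≤ v + 3) := by rw [← qj]; omega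
      clear qj qk
      rcases hv with hv | hv <;> omega
    · have hk : (j : ℕ) = p + 3 := by omega
      have hk' := a3.1 hk
      clear a0 a3 b0 b3
      have : ¬ (v ≤ (σ k : ℕ) ∧ (σ k : ℕ) ≤ v + 3) := by rw [← qk]; omega
      clear qj qk
      rcases hv with hv | hv <;> omega
  · rcases hval with hval | hval
    · have : ¬ (p ≤ (j : ℕ) ∧ (j : ℕ) ≤ p + 3) := by rw [qj]; omega
      have hk : (k : ℕ) = p + 1 ∨ (k : ℕ) = p + 2 := by
        clear a0 a1 a2 a3 qj qk
        rcases hv with hv | hv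
        · right; rw [b2]; omega
        · left; rw [b1]; omega
      omega
    · have : ¬ (p ≤ (k : ℕ) ∧ (k : ℕ) ≤ p + 3) := by rw [qk]; omega
      have hk : (j : ℕ) = p + 1 ∨ (j : ℕ) = p + 2 := by
        clear b0 b1 b2 b3 qj qk
        rcases hv with hv | hv
        · left; rw [a1]; omega
        · right; rw [a2]; omega
      omega

theorem adjQ {n : ℕ} {a b q : Fin n} {p : ℕ} (hab : a < b)
    (ha : (a : ℕ) < p ∨ p + 3 < (a : ℕ)) (hb : (b : ℕ) < p ∨ p + 3 < (b : ℕ))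
    (hq : p ≤ q ∧ (q : ℕ) ≤ p + 3)
    (hc : ∀ c : Fin n, (c = q ∨ (c : ℕ) < p ∨ p + 3 < (c : ℕ)) → ¬ Btw a b c) :
    (b : ℕ) = a + 1 := by
  by_contra hne
  have h1 := hc q (Or.inl rfl)
  rw [Fin.lt_def] at hab
  have hbn := b.2
  have h2 := hc ⟨a + 1, by omega⟩
  clear hc
  unfold Btw at h1 h2
  simp only [Fin.lt_def] at h1 h2
  by_cases hin : (a : ℕ) + 1 < p ∨ p + 3 < (a : ℕ) + 1
  · have := h2 (Or.inr hin)
    omega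
  · clear h2
    omega

theorem nbQ {n : ℕ} {x q : Fin n} {p : ℕ} (hp : p + 3 < n)
    (hx : (x : ℕ) < p ∨ p + 3 < (x : ℕ))
    (hq : p ≤ q ∧ (q : ℕ) ≤ p + 3)
    (hc : ∀ c : Fin n, ((c : ℕ) < p ∨ p + 3 < (c : ℕ)) → ¬ Btw q x c) :
    (x : ℕ) + 1 = p ∨ (x : ℕ) = p + 4 := by
  by_contra hcon
  have hxn := x.2
  rcases hx with hx | hx
  · have := hc ⟨p - 1, by omega⟩ (by simp only; omega)
    apply this
    unfold Btw; simp only [Fin.lt_def]; omega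
  · have := hc ⟨p + 4, by omega⟩ (by simp only; omega)
    apply this
    unfold Btw; simp only [Fin.lt_def]; omega

set_option maxHeartbeats 1000000 in
theorem contract {m n : ℕ} {π : Equiv.Perm (Fin m)} {σ : Equiv.Perm (Fin n)}
    (hπ : IsKing π) (hσ : IsKing σ)
    (hs : ∀ i, Bm π σ i → ∃ j k, Bm π σ j ∧ Bm π σ k ∧ SepN σ i j k)
    {p v : ℕ} {e0 e1 e2 e3 : Fin n} (h1 : Bm π σ e1)
    (p0 : (e0 : ℕ) = p) (p1 : (e1 : ℕ) = p + 1) (p2 : (e2 : ℕ) = p + 2) (p3 : (e3 : ℕ) = p + 3)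
    (hv : ((σ e0 : ℕ) = v + 1 ∧ (σ e1 : ℕ) = v + 3 ∧ (σ e2 : ℕ) = v ∧ (σ e3 : ℕ) = v + 2) ∨
      ((σ e0 : ℕ) = v + 2 ∧ (σ e1 : ℕ) = v ∧ (σ e2 : ℕ) = v + 3 ∧ (σ e3 : ℕ) = v + 1)) :
    ∃ l, ∃ τ : Equiv.Perm (Fin l), (n = l + 1 ∨ n = l + 3) ∧ IsKing τ ∧
      Contains π τ ∧ Contains τ σ := by
  have hF : ∀ e x : Fin n, (x : ℕ) = e ↔ (σ x : ℕ) = σ e := by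
    intro e x
    rw [← Fin.ext_iff, ← Fin.ext_iff]
    exact σ.injective.eq_iff.symm
  have hQ : ∀ x : Fin n, (p ≤ x ∧ (x : ℕ) ≤ p + 3) ↔ (v ≤ σ x ∧ (σ x : ℕ) ≤ v + 3) := by
    intro x
    have := hF e0 x
    have := hF e1 x
    have := hF e2 x
    have := hF e3 x
    omega
  obtain ⟨f, hf, hfe⟩ := h1
  have n02 : ∀ a b, ¬ (f a = e0 ∧ f b = e2) := by
    rintro a b ⟨ha, hb⟩
    obtain ⟨c, hc⟩ := kingE hπ hf (a := a) (b := b) (fun h => by subst h; rw [ha] at hb; subst hb; omega)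
    rw [ha, hb] at hc
    unfold Btw at hc
    have h1 := hF e1 (f c)
    have h2 : (f c : ℕ) ≠ e1 := fun hh => hfe c (Fin.ext hh)
    omega
  have n03 : ∀ a b, ¬ (f a = e0 ∧ f b = e3) := by
    rintro a b ⟨ha, hb⟩
    obtain ⟨c, hc⟩ := kingE hπ hf (a := a) (b := b) (fun h => by subst h; rw [ha] at hb; subst hb; omega)
    rw [ha, hb] at hc
    unfold Btw at hc
    have h1 := hF e1 (f c)
    have h2 : (f c : ℕ) ≠ e1 := fun hh => hfe c (Fin.ext hh)
    have h3 : (f c : ℕ) ≠ e2 := fun hh => n02 a c ⟨ha, Fin.ext hh⟩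
    omega
  have n23 : ∀ a b, ¬ (f a = e2 ∧ f b = e3) := by
    rintro a b ⟨ha, hb⟩
    obtain ⟨c, hc⟩ := kingE hπ hf (a := a) (b := b) (fun h => by subst h; rw [ha] at hb; subst hb; omega)
    rw [ha, hb] at hc
    unfold Btw at hc
    have h1 := hF e0 (f c)
    have h3 : (f c : ℕ) ≠ e0 := fun hh => n02 c a ⟨Fin.ext hh, ha⟩
    omega
  have hq : ∃ q : Fin n, (p ≤ q ∧ (q : ℕ) ≤ p + 3) ∧ ∀ a, p ≤ f a → (f a : ℕ) ≤ p + 3 → f a = q := by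
    by_cases hex : ∃ a, p ≤ f a ∧ (f a : ℕ) ≤ p + 3
    · obtain ⟨a, ha⟩ := hex
      refine ⟨f a, ha, fun b hb1 hb2 => ?_⟩
      have := n02 a b; have := n02 b a
      have := n03 a b; have := n03 b a
      have := n23 a b; have := n23 b a
      have := hfe a; have := hfe b
      simp only [Fin.ext_iff, ne_eq] at *
      omega
    · refine ⟨e0, by omega, fun b hb1 hb2 => absurd ⟨b, hb1, hb2⟩ hex⟩
  obtain ⟨q, hqQ, hq⟩ := hq
  by_contra hno
  let T : Finset (Fin n) := Finset.univ \ (({e0, e1, e2, e3} : Finset (Fin n)).erase q)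
  have hT : ∀ x, x ∈ T ↔ (x = q ∨ (x : ℕ) < p ∨ p + 3 < (x : ℕ)) := by
    intro x
    simp only [T, Finset.mem_sdiff, Finset.mem_univ, true_and, Finset.mem_erase, Finset.mem_insert,
      Finset.mem_singleton, Fin.ext_iff]
    omega
  have hcard : T.card = n - 3 := by
    have c4 : ({e0, e1, e2, e3} : Finset (Fin n)).card = 4 := by
      have : e0 ≠ e1 ∧ e0 ≠ e2 ∧ e0 ≠ e3 ∧ e1 ≠ e2 ∧ e1 ≠ e3 ∧ e2 ≠ e3 := by
        simp only [Fin.ext_iff, ne_eq]; omega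
      obtain ⟨a1, a2, a3, a4, a5, a6⟩ := this
      simp [a1, a2, a3, a4, a5, a6]
    have hqm : q ∈ ({e0, e1, e2, e3} : Finset (Fin n)) := by
      simp only [Finset.mem_insert, Finset.mem_singleton, Fin.ext_iff]
      omega
    rw [Finset.card_sdiff_of_subset (Finset.subset_univ _), Finset.card_erase_of_mem hqm, c4]
    simp
  have hfT : ∀ a, f a ∈ T := by
    intro a
    rw [hT]
    have := hq a
    by_contra hh
    push Not at hh
    exact hh.1 (this hh.2.1 hh.2.2)
  have hQq := hQ q
  have hvn : v + 3 < n := by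
    have := (σ e0).2; have := (σ e1).2; have := (σ e2).2; have := (σ e3).2
    omega
  have hpn : p + 3 < n := by have := e3.2; omega
  have hout : ∀ x : Fin n, ((x : ℕ) < p ∨ p + 3 < (x : ℕ)) ↔
      ((σ x : ℕ) < v ∨ v + 3 < (σ x : ℕ)) := by
    intro x
    have := hQ x
    clear hv hno
    omega
  have hnb : ∀ x : Fin n, x ∈ T → x ≠ q →
      (∀ k ∈ T, ¬ Btw q x k ∧ ¬ Btw (σ q) (σ x) (σ k)) → False := by
    intro x hxT hxq hk
    have hx := (hT x).1 hxT
    have hQx := hQ x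
    have hx' : (x : ℕ) < p ∨ p + 3 < (x : ℕ) := hx.resolve_left hxq
    have hpos : (x : ℕ) + 1 = p ∨ (x : ℕ) = p + 4 :=
      nbQ hpn hx' hqQ (fun c hc => (hk c ((hT c).2 (Or.inr hc))).1)
    have hval : (σ x : ℕ) + 1 = v ∨ (σ x : ℕ) = v + 4 := by
      refine nbQ hvn ((hout x).1 hx') (hQq.1 hqQ) (fun c hc => ?_)
      have h5 := (hk (σ.symm c) ((hT _).2 (Or.inr ((hout _).2 (by simpa using hc))))).2
      simpa using h5
    have hB : Bm π σ x := by
      by_cases hxS : ∃ a, f a = x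
      · obtain ⟨a, rfl⟩ := hxS
        by_cases hqS : ∃ b, f b = q
        · obtain ⟨b, rfl⟩ := hqS
          obtain ⟨c, hc⟩ := kingE hπ hf (a := b) (b := a) (fun h => by subst h; exact hxq rfl)
          exact absurd hc (not_or.2 ⟨(hk (f c) (hfT c)).1, (hk (f c) (hfT c)).2⟩)
        · push Not at hqS
          refine ⟨_, swap hf (a := a) hqS (fun b => ⟨fun h => (hk _ (hfT b)).1 h.symm,
            fun h => (hk _ (hfT b)).2 h.symm⟩), ?_⟩
          intro b
          by_cases hb : b = a
          · subst hb; rw [Function.update_self]; exact hxq.symm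
          · rw [Function.update_of_ne hb]
            exact fun hh => hb (hf.inj hh)
      · push Not at hxS
        exact ⟨f, hf, hxS⟩
    obtain ⟨j, k, -, -, hsep⟩ := hs x hB
    exact nonsep hF p0 p1 p2 p3 hv hQ hpos hval hsep
  obtain ⟨τ, t1, t2, t3⟩ := pat (π := π) (σ := σ) T (by
    intro i hi j hj hij
    by_contra hcon
    push Not at hcon
    by_cases hiq : i = q
    · subst hiq
      exact hnb j hj hij.ne' hcon
    by_cases hjq : j = q
    · subst hjq
      exact hnb i hi hij.ne (fun k hk => ⟨fun h => (hcon k hk).1 h.symm, fun h => (hcon k hk).2 h.symm⟩)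
    have hi' : (i : ℕ) < p ∨ p + 3 < (i : ℕ) := by exact ((hT i).1 hi).resolve_left hiq
    have hj' : (j : ℕ) < p ∨ p + 3 < (j : ℕ) := by exact ((hT j).1 hj).resolve_left hjq
    have hpos : (j : ℕ) = i + 1 :=
      adjQ hij hi' hj' hqQ (fun c hc => (hcon c ((hT c).2 hc)).1)
    have hcv : ∀ c : Fin n, (c = σ q ∨ (c : ℕ) < v ∨ v + 3 < (c : ℕ)) → ¬ Btw (σ i) (σ j) c := by
      intro c hc
      have h5 := (hcon (σ.symm c) ((hT _).2 (by
        rcases hc with rfl | hc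
        · left; simp
        · right; exact (hout _).2 (by simpa using hc)))).2
      simpa using h5
    have hk := kingNat hσ i j hpos
    have hne : σ i ≠ σ j := fun hh => hij.ne (σ.injective hh)
    rcases lt_or_gt_of_ne hne with h2 | h2
    · exact hk.1 (adjQ h2 ((hout i).1 hi') ((hout j).1 hj') (hQq.1 hqQ) hcv)
    · exact hk.2 (adjQ h2 ((hout j).1 hj') ((hout i).1 hi') (hQq.1 hqQ)
        (fun c hc hh => hcv c hc hh.symm))) (n-3) hcard
  exact hno ⟨n-3, τ, by omega, t1, t3 f hf hfT, t2⟩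

theorem step {m n : ℕ} {π : Equiv.Perm (Fin m)} {σ : Equiv.Perm (Fin n)}
    (hπ : IsKing π) (hσ : IsKing σ) (hc : Contains π σ) (hmn : m < n) :
    ∃ l, ∃ τ : Equiv.Perm (Fin l), (n = l + 1 ∨ n = l + 3) ∧ IsKing τ ∧
      Contains π τ ∧ Contains τ σ := by
  by_contra hno
  have hs : ∀ i, Bm π σ i → ∃ j k, Bm π σ j ∧ Bm π σ k ∧ SepN σ i j k :=
    fun i hi => sep2 hπ hσ hno hi
  have h0 : ∃ i, Bm π σ i := by
    obtain ⟨f, hf⟩ := (contains_iff _ _).1 hc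
    by_contra hcon
    have hsurj : Function.Surjective f := by
      intro i
      by_contra hh
      push Not at hh
      exact hcon ⟨i, f, hf, hh⟩
    have := Fintype.card_le_of_surjective f hsurj
    simp at this
    omega
  obtain ⟨i, hi⟩ := h0
  obtain ⟨p, v, h | h⟩ := blk hσ hs hi
  · obtain ⟨⟨e0, b0, x0, y0⟩, ⟨e1, b1, x1, y1⟩, ⟨e2, b2, x2, y2⟩, ⟨e3, b3, x3, y3⟩⟩ := h
    exact hno (contract (p := p.toNat) (v := v.toNat) hπ hσ hs (e0 := e0) (e2 := e2) (e3 := e3) b1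
      (by omega) (by omega) (by omega) (by omega) (by omega))
  · obtain ⟨⟨e0, b0, x0, y0⟩, ⟨e1, b1, x1, y1⟩, ⟨e2, b2, x2, y2⟩, ⟨e3, b3, x3, y3⟩⟩ := h
    exact hno (contract (p := p.toNat) (v := v.toNat) hπ hσ hs (e0 := e0) (e2 := e2) (e3 := e3) b1
      (by omega) (by omega) (by omega) (by omega) (by omega))

theorem eq_of_contains {n : ℕ} {π σ : Equiv.Perm (Fin n)} (h : Contains π σ) : π = σ := by
  have key : ∀ g : Fin n → Fin n, StrictMono g → ∀ a, g a = a := by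
    intro g hg a
    have hb := Finite.injective_iff_bijective.1 hg.injective
    exact congrFun (congrArg DFunLike.coe (Subsingleton.elim
      (StrictMono.orderIsoOfSurjective g hg hb.2) (OrderIso.refl _))) a
  obtain ⟨f, hf⟩ := h
  have hid := key f f.strictMono
  simp only [hid] at hf
  have hm : StrictMono (fun x => σ (π.symm x)) := by
    intro x y hxy
    have := (hf (π.symm x) (π.symm y)).1 (by simpa using hxy)
    exact this
  ext a
  have := key _ hm (π a)
  simp at this
  rw [this]

theorem chain (m : ℕ) (π : Equiv.Perm (Fin m)) (hπ : IsKing π) (n : ℕ) :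
    ∀ (σ : Equiv.Perm (Fin n)), IsKing σ → Contains π σ →
    ∃ (k : ℕ) (c : Fin (k + 1) → Σ l : ℕ, Equiv.Perm (Fin l)),
      c 0 = ⟨m, π⟩ ∧ c (Fin.last k) = ⟨n, σ⟩ ∧
      (∀ i : Fin (k + 1), IsKing (c i).2) ∧
      (∀ i : Fin k, StrictContains (c i.castSucc).2 (c i.succ).2 ∧
        ((c i.succ).1 = (c i.castSucc).1 + 1 ∨ (c i.succ).1 = (c i.castSucc).1 + 3)) := by
  induction n using Nat.strong_induction_on with
  | _ n ih =>
  intro σ hσ hc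
  have hmn : m ≤ n := by
    obtain ⟨f, -⟩ := hc
    simpa using Fintype.card_le_of_injective f f.injective
  rcases hmn.eq_or_lt with rfl | hmn
  · have := eq_of_contains hc
    subst this
    exact ⟨0, fun _ => ⟨m, π⟩, rfl, rfl, fun _ => hπ, fun i => i.elim0⟩
  · obtain ⟨l, τ, hl, hτ, h1, h2⟩ := step hπ hσ hc hmn
    obtain ⟨k, c, c0, c1, c2, c3⟩ := ih l (by omega) τ hτ h1
    refine ⟨k + 1, Fin.snoc c ⟨n, σ⟩, ?_, ?_, ?_, ?_⟩
    · rw [← Fin.castSucc_zero, Fin.snoc_castSucc, c0]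
    · rw [Fin.snoc_last]
    · intro i
      refine Fin.lastCases ?_ (fun i => ?_) i
      · rw [Fin.snoc_last]; exact hσ
      · rw [Fin.snoc_castSucc]; exact c2 i
    · intro i
      refine Fin.lastCases ?_ (fun i => ?_) i
      · rw [Fin.snoc_castSucc, Fin.succ_last, Fin.snoc_last, c1]
        exact ⟨⟨h2, by change l < n; omega⟩, hl⟩
      · rw [Fin.snoc_castSucc, Fin.succ_castSucc, Fin.snoc_castSucc]
        exact c3 i

end CK

/-- between any two kings `π ≺ σ` there is a chain of kings with
consecutive length differences in `{1, 3}`. -/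
theorem chain_of_kings (m n : ℕ) (π : Equiv.Perm (Fin m)) (σ : Equiv.Perm (Fin n))
    (hπ : IsKing π) (hσ : IsKing σ) (hπσ : StrictContains π σ) :
    ∃ (k : ℕ) (c : Fin (k + 1) → Σ l : ℕ, Equiv.Perm (Fin l)),
      c 0 = ⟨m, π⟩ ∧ c (Fin.last k) = ⟨n, σ⟩ ∧
      (∀ i : Fin (k + 1), IsKing (c i).2) ∧
      (∀ i : Fin k, StrictContains (c i.castSucc).2 (c i.succ).2 ∧
        ((c i.succ).1 = (c i.castSucc).1 + 1 ∨ (c i.succ).1 = (c i.castSucc).1 + 3)) := by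
  exact CK.chain m π hπ n σ hσ hπσ.1
end
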